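/- There exists a universal constant C > 0 such that the following holds for all positive integers n and d ≥ 2. Given symmetric matrices A_1, ..., A_n ∈ ℝ^{d×d}, let X = ∑_{i=1}^n g_i A_i where g_1, ..., g_n are i.i.d. standard Gaussian random variables. Then 𝔼[‖X‖_op] ≤ C · (σ(X) + (log d)^{3/4} · σ(X)^{1/2} · v(X)^{1/2}). -/

import Mathlib

open MeasureTheory ProbabilityTheory

/-- Operator norm (largest singular value) of a real matrix, as the norm of the
induced linear map between Euclidean spaces. -/
noncomputable def opNorm {m n : Type*} [Fintype m] [Fintype n] [DecidableEq n]
    (M : Matrix m n ℝ) : ℝ :=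
  ‖LinearMap.toContinuousLinearMap (Matrix.toEuclideanLin M)‖

/-- Squared Frobenius norm of a real matrix. -/
noncomputable def frobNormSq {m n : Type*} [Fintype m] [Fintype n]
    (M : Matrix m n ℝ) : ℝ := ∑ i, ∑ j, (M i j) ^ 2

/-- Product of `n` standard Gaussian measures on `ℝ`. -/
noncomputable def gaussianPi (n : ℕ) : Measure (Fin n → ℝ) :=
  Measure.pi fun _ => gaussianReal 0 1

/-- `σ(X)` for `X = ∑ g i • A i`: square root of the operator norm of `∑ A i ^ 2`. -/
noncomputable def sigmaX {n d : ℕ} (A : Fin n → Matrix (Fin d) (Fin d) ℝ) : ℝ :=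
  Real.sqrt (opNorm (∑ i, A i * A i))

/-- Covariance matrix `Cov(X) = ∑ vec(A i) vec(A i)ᵀ`, indexed by pairs of entries. -/
noncomputable def covX {n d : ℕ} (A : Fin n → Matrix (Fin d) (Fin d) ℝ) :
    Matrix (Fin d × Fin d) (Fin d × Fin d) ℝ :=
  ∑ i, Matrix.of fun p q => A i p.1 p.2 * A i q.1 q.2

/-- `v(X)`: square root of the operator norm of `Cov(X)`. -/
noncomputable def vX {n d : ℕ} (A : Fin n → Matrix (Fin d) (Fin d) ℝ) : ℝ :=
  Real.sqrt (opNorm (covX A))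

set_option linter.all false


section GaussFunctional
open MvPolynomial

/-- Induction principle for polynomials adapted to Gaussian integration by parts. -/
theorem poly_ind {J : Type*} (p : MvPolynomial J ℝ → Prop) (h1 : p 1)
    (hadd : ∀ P Q, p P → p Q → p (P + Q)) (hsmul : ∀ (a : ℝ) P, p P → p (a • P))
    (hX : ∀ i Q, p Q → p (pderiv i Q) → p (X i * Q)) : ∀ P, p P := by
  classical
  have key : ∀ n : ℕ, ∀ m : J →₀ ℕ, m.degree = n → p (monomial m 1) := by
    intro n
    induction n using Nat.strong_induction_on with
    | _ n ih =>
      intro m hm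
      by_cases h0 : m = 0
      · subst h0; simpa using h1
      · obtain ⟨i, hi⟩ : ∃ i, m i ≠ 0 := by
          by_contra h
          push Not at h
          exact h0 (Finsupp.ext h)
        set m' := m - Finsupp.single i 1 with hm'
        have hmm : m = Finsupp.single i 1 + m' := by
          rw [hm', add_tsub_cancel_of_le]
          rw [Finsupp.single_le_iff]; omega
        have hd : n = 1 + m'.degree := by
          rw [← hm, hmm, map_add, Finsupp.degree_single]
        have e : (monomial m (1:ℝ)) = X i * monomial m' 1 := by
          rw [hmm, X, monomial_mul]; simp
        rw [e]
        apply hX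
        · exact ih m'.degree (by omega) m' rfl
        · rw [pderiv_monomial]
          have : (monomial (m' - Finsupp.single i 1) (1 * (m' i : ℝ)))
              = (m' i : ℝ) • monomial (m' - Finsupp.single i 1) (1:ℝ) := by
            rw [smul_monomial]; simp
          rw [this]
          apply hsmul
          refine ih _ ?_ _ rfl
          have : (m' - Finsupp.single i 1).degree ≤ m'.degree := by
            apply Finsupp.degree_mono
            exact tsub_le_self
          omega
  intro P
  induction P using MvPolynomial.induction_on' with
  | monomial m a =>
    have : monomial m a = a • monomial m (1:ℝ) := by rw [smul_monomial]; simp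
    rw [this]; exact hsmul _ _ (key _ m rfl)
  | add P Q hP hQ => exact hadd _ _ hP hQ

/-- Moments of the standard Gaussian. -/
noncomputable def gmom : ℕ → ℝ
  | 0 => 1
  | 1 => 0
  | (m+2) => (m+1) * gmom m

/-- Expectation of a polynomial in independent centered Gaussians with variances `b`. -/
noncomputable def gE {J : Type*} [Fintype J] (b : J → ℝ) : MvPolynomial J ℝ →ₗ[ℝ] ℝ :=
  (MvPolynomial.basisMonomials J ℝ).constr ℝ (fun m => ∏ j, (gmom (m j) * b j ^ (m j / 2)))

variable {J : Type*} [Fintype J]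

theorem gE_monomial (b : J → ℝ) (m : J →₀ ℕ) (a : ℝ) :
    gE b (monomial m a) = a * ∏ j, (gmom (m j) * b j ^ (m j / 2)) := by
  have : monomial m a = a • (MvPolynomial.basisMonomials J ℝ) m := by
    rw [coe_basisMonomials, smul_monomial]; simp
  rw [this, map_smul, gE, Module.Basis.constr_basis, smul_eq_mul]

theorem gE_one (b : J → ℝ) : gE b 1 = 1 := by
  have := gE_monomial b 0 1
  simpa [gmom] using this

theorem gmom_step (b : ℝ) (k : ℕ) :
    gmom (k+1) * b ^ ((k+1)/2) = b * (k * (gmom (k-1) * b ^ ((k-1)/2))) := by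
  cases k with
  | zero => simp [gmom]
  | succ k =>
    have : (k+1+1)/2 = k/2 + 1 := by omega
    rw [this]
    simp [gmom, pow_succ]; ring

theorem gE_ibp (b : J → ℝ) (i : J) (P : MvPolynomial J ℝ) :
    gE b (X i * P) = b i * gE b (pderiv i P) := by
  classical
  induction P using MvPolynomial.induction_on' with
  | monomial m a =>
    rw [X, monomial_mul, pderiv_monomial, gE_monomial, gE_monomial,
      ← Finset.mul_prod_erase Finset.univ _ (Finset.mem_univ i),
      ← Finset.mul_prod_erase Finset.univ _ (Finset.mem_univ i)]
    have h1 : ∀ j ∈ Finset.univ.erase i, gmom ((Finsupp.single i 1 + m : J →₀ ℕ) j) * b j ^ ((Finsupp.single i 1 + m : J →₀ ℕ) j / 2)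
        = gmom ((m - Finsupp.single i 1 : J →₀ ℕ) j) * b j ^ ((m - Finsupp.single i 1 : J →₀ ℕ) j / 2) := by
      intro j hj
      have hj : j ≠ i := Finset.ne_of_mem_erase hj
      simp [Finsupp.single_apply, hj.symm]
    rw [Finset.prod_congr rfl h1]
    have h2 : (Finsupp.single i 1 + m : J →₀ ℕ) i = m i + 1 := by simp [add_comm]
    have h3 : (m - Finsupp.single i 1 : J →₀ ℕ) i = m i - 1 := by simp
    rw [h2, h3, gmom_step]; ring
  | add P Q hP hQ => rw [mul_add, map_add, hP, hQ, map_add, map_add]; ring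

theorem gE_ibp2 (b : J → ℝ) (i : J) (P : MvPolynomial J ℝ) :
    gE b (P * X i) = b i * gE b (pderiv i P) := by
  rw [mul_comm, gE_ibp]

theorem pderiv_comm' (i j : J) (P : MvPolynomial J ℝ) :
    pderiv i (pderiv j P) = pderiv j (pderiv i P) := by
  classical
  induction P using MvPolynomial.induction_on with
  | C a => simp
  | add P Q hP hQ => simp [hP, hQ]
  | mul_X P n hP =>
    simp only [pderiv_mul, map_add, hP, pderiv_X, Pi.single_apply]
    split_ifs <;> simp <;> ring

theorem gE_hasDerivAt (b : ℝ → J → ℝ) (b' : J → ℝ) (s : ℝ)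
    (hb : ∀ j, HasDerivAt (fun s => b s j) (b' j) s) (P : MvPolynomial J ℝ) :
    HasDerivAt (fun s => gE (b s) P)
      (1 / 2 * ∑ j, b' j * gE (b s) (pderiv j (pderiv j P))) s := by
  classical
  induction P using poly_ind with
  | h1 =>
    have e : (fun s => gE (b s) (1 : MvPolynomial J ℝ)) = fun _ => 1 := funext fun s => gE_one _
    rw [e]
    refine (hasDerivAt_const s (1:ℝ)).congr_deriv (Eq.symm ?_)
    simp
  | hadd P Q hP hQ =>
    have e : (fun s => gE (b s) (P + Q)) = fun s => gE (b s) P + gE (b s) Q := funext fun s => map_add _ _ _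
    rw [e]
    refine (hP.add hQ).congr_deriv (Eq.symm ?_)
    simp only [map_add, mul_add, Finset.sum_add_distrib]
  | hsmul a P hP =>
    have := hP.const_mul a
    have e0 : (fun s => gE (b s) (a • P)) = fun s => a * gE (b s) P := funext fun s => map_smul _ _ _
    rw [e0]
    have e : ∀ j, pderiv j (pderiv j (a • P)) = a • pderiv j (pderiv j P) := by
      intro j; simp
    refine this.congr_deriv (Eq.symm ?_)
    simp only [e, map_smul, smul_eq_mul, Finset.mul_sum]
    refine Finset.sum_congr rfl fun j _ => ?_
    ring
  | hX i Q _ hQ =>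
    have e0 : (fun s => gE (b s) (X i * Q)) = fun s => b s i * gE (b s) (pderiv i Q) := funext fun s => gE_ibp _ _ _
    rw [e0]
    refine ((hb i).mul hQ).congr_deriv (Eq.symm ?_)
    have e : ∀ j, pderiv j (pderiv j (X i * Q)) =
        X i * pderiv j (pderiv j Q) + if j = i then (2:ℝ) • pderiv i Q else 0 := by
      intro j
      by_cases h : j = i
      · subst h
        simp [pderiv_mul, two_smul]; ring
      · simp [pderiv_mul, pderiv_X_of_ne (Ne.symm h), h]
    simp only [e, map_add, gE_ibp, mul_add, Finset.sum_add_distrib, pderiv_comm' i]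
    have : ∑ j, b' j * gE (b s) (if j = i then (2:ℝ) • pderiv i Q else 0) = b' i * (2 * gE (b s) (pderiv i Q)) := by
      rw [Finset.sum_eq_single i]
      · simp
      · intro j _ h; simp [h]
      · simp
    rw [this]
    simp only [pderiv_comm' i, Finset.mul_sum]
    rw [add_comm]
    congr 1
    · ring
    · refine Finset.sum_congr rfl fun j _ => ?_
      ring

/-- chain rule -/
theorem pderiv_aeval' {I : Type*} [Fintype I] (f : I → MvPolynomial J ℝ) (j : J) (P : MvPolynomial I ℝ) :
    pderiv j (aeval f P) = ∑ i, aeval f (pderiv i P) * pderiv j (f i) := by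
  classical
  induction P using MvPolynomial.induction_on with
  | C a => simp
  | add P Q hP hQ => simp only [map_add, hP, hQ, add_mul, Finset.sum_add_distrib]
  | mul_X P n hP =>
    simp only [map_mul, aeval_X, pderiv_mul, hP, map_add, add_mul, Finset.sum_add_distrib,
      pderiv_X, Pi.single_apply]
    congr 1
    · rw [Finset.sum_mul]; refine Finset.sum_congr rfl fun i _ => by ring
    · rw [Finset.sum_eq_single n]
      · simp
      · intro i _ h; simp [Ne.symm h]
      · simp

theorem pderiv_lin (a : J → ℝ) (j : J) : pderiv j (∑ k, a k • (X k : MvPolynomial J ℝ)) = C (a j) := by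
  classical
  rw [map_sum, Finset.sum_eq_single j]
  · simp [smul_eq_C_mul]
  · intro k _ h; simp [pderiv_X_of_ne h]
  · simp

theorem gE_lin {I : Type*} [Fintype I] [DecidableEq I] (b : J → ℝ) (c : I → ℝ) (a : I → J → ℝ)
    (h : ∀ i i', ∑ j, b j * a i j * a i' j = if i = i' then c i else 0) (P : MvPolynomial I ℝ) :
    gE b (aeval (fun i => ∑ j, a i j • (X j : MvPolynomial J ℝ)) P) = gE c P := by
  classical
  induction P using poly_ind with
  | h1 => simp [gE_one]
  | hadd P Q hP hQ => simp only [map_add, hP, hQ]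
  | hsmul a P hP => simp only [map_smul, hP]
  | hX i Q _ hQ =>
    rw [map_mul, aeval_X, Finset.sum_mul, map_sum, gE_ibp, ← hQ]
    simp only [smul_mul_assoc, map_smul, gE_ibp, pderiv_aeval', pderiv_lin, smul_eq_mul]
    simp only [mul_comm _ (C _), ← smul_eq_C_mul, map_sum, map_smul, Finset.mul_sum]
    rw [Finset.sum_comm]
    have : ∀ i', ∑ j, a i j * (b j * (a i' j • gE b (aeval (fun i => ∑ j, a i j • (X j : MvPolynomial J ℝ)) (pderiv i' Q))))
      = (if i = i' then c i else 0) * gE b (aeval (fun i => ∑ j, a i j • (X j : MvPolynomial J ℝ)) (pderiv i' Q)) := by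
      intro i'
      rw [← h i i', Finset.sum_mul]
      refine Finset.sum_congr rfl fun j _ => ?_
      rw [smul_eq_mul]; ring
    rw [Finset.sum_congr rfl fun i' _ => this i']
    simp

end GaussFunctional


section GaussIntegral
open MvPolynomial

theorem integrable_pow_gauss (m : ℕ) : Integrable (fun x : ℝ => x ^ m) (gaussianReal 0 1) := by
  have h := (memLp_id_gaussianReal (μ := 0) (v := 1) (m : NNReal))
  have := h.integrable_norm_pow' 
  rw [← integrable_norm_iff (by fun_prop)]
  simpa using this

theorem moment_step (m : ℕ) :
    ∫ x, x ^ (m+2) ∂(gaussianReal 0 1) = (m+1) * ∫ x, x ^ m ∂(gaussianReal 0 1) := by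
  have hInt : ∀ k : ℕ, Integrable (fun x : ℝ => x ^ k * gaussianPDFReal 0 1 x) := by
    intro k
    have := integrable_pow_gauss k
    rw [gaussianReal_of_var_ne_zero _ one_ne_zero,
      integrable_withDensity_iff_integrable_smul' (by fun_prop) (by simp [gaussianPDF])] at this
    refine this.congr (Filter.Eventually.of_forall fun x => ?_)
    simp [toReal_gaussianPDF, mul_comm]
  have hd : ∀ x, HasDerivAt (fun x => gaussianPDFReal 0 1 x) (-x * gaussianPDFReal 0 1 x) x := by
    intro x
    simp only [gaussianPDFReal_def]
    have h1 : HasDerivAt (fun x : ℝ => -(x - 0) ^ 2 / (2 * ((1 : NNReal) : ℝ))) (-x) x := by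
      have := (((hasDerivAt_id x).sub_const 0).pow 2).neg.div_const (2 * ((1 : NNReal) : ℝ))
      refine this.congr_deriv ?_
      simp; ring
    refine (h1.exp.const_mul _).congr_deriv ?_
    ring
  have key := integral_mul_deriv_eq_deriv_mul_of_integrable
    (u := fun x : ℝ => x ^ (m+1)) (v := fun x => gaussianPDFReal 0 1 x)
    (u' := fun x => ((m+1 : ℕ) : ℝ) * x ^ m) (v' := fun x => -x * gaussianPDFReal 0 1 x)
    (fun x _ => by simpa using hasDerivAt_pow (m+1) x) (fun x _ => hd x)
    ((hInt (m+2)).neg.congr (Filter.Eventually.of_forall fun x => by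
      simp [pow_succ]; ring))
    (((hInt m).const_mul ((m+1 : ℕ) : ℝ)).congr (Filter.Eventually.of_forall fun x => by
      simp; ring))
    (hInt (m+1))
  rw [integral_gaussianReal_eq_integral_smul one_ne_zero,
    integral_gaussianReal_eq_integral_smul one_ne_zero, ← integral_const_mul]
  have e1 : ∫ x : ℝ, gaussianPDFReal 0 1 x • x ^ (m+2) = - ∫ x : ℝ, x ^ (m+1) * (-x * gaussianPDFReal 0 1 x) := by
    rw [← integral_neg]
    congr 1; funext x; simp [pow_succ]; ring
  rw [e1, key, neg_neg]
  congr 1; funext x; simp; ring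

theorem moment_eq (m : ℕ) : ∫ x, x ^ m ∂(gaussianReal 0 1) = gmom m := by
  induction m using Nat.twoStepInduction with
  | zero => simp [gmom]
  | one => simp [gmom]
  | more m h _ => rw [moment_step, h, gmom]

variable {J : Type*} [Fintype J]

theorem eval_monomial' (x : J → ℝ) (m : J →₀ ℕ) (a : ℝ) :
    eval x (monomial m a) = a * ∏ j, x j ^ m j := by
  rw [eval_monomial, Finsupp.prod_fintype _ _ (fun _ => pow_zero _)]

/-- standard Gaussian measure on `J → ℝ` -/
noncomputable abbrev gpi (J : Type*) [Fintype J] : Measure (J → ℝ) :=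
  Measure.pi fun _ => gaussianReal 0 1

theorem eval_integrable (b : J → ℝ) (P : MvPolynomial J ℝ) :
    Integrable (fun g : J → ℝ => eval (fun j => Real.sqrt (b j) * g j) P) (gpi J) := by
  induction P using MvPolynomial.induction_on' with
  | monomial m a =>
    simp only [eval_monomial', mul_pow]
    apply Integrable.const_mul
    apply Integrable.fintype_prod (f := fun j x => Real.sqrt (b j) ^ (m j) * x ^ (m j))
    intro j
    exact (integrable_pow_gauss _).const_mul _
  | add P Q hP hQ => simp only [map_add]; exact hP.add hQ

theorem gE_eq_integral (b : J → ℝ) (hb : ∀ j, 0 ≤ b j) (P : MvPolynomial J ℝ) :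
    gE b P = ∫ g, eval (fun j => Real.sqrt (b j) * g j) P ∂(gpi J) := by
  induction P using MvPolynomial.induction_on' with
  | monomial m a =>
    simp only [eval_monomial', mul_pow, gE_monomial]
    rw [integral_const_mul,
      integral_fintype_prod_eq_prod (f := fun j x => Real.sqrt (b j) ^ (m j) * x ^ (m j))]
    congr 1
    refine Finset.prod_congr rfl fun j _ => ?_
    rw [integral_const_mul, moment_eq]
    rcases Nat.even_or_odd' (m j) with ⟨k, hk | hk⟩
    · rw [hk, pow_mul, Real.sq_sqrt (hb j)]
      have : 2 * k / 2 = k := by omega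
      rw [this]; ring
    · have : ∀ k, gmom (2 * k + 1) = 0 := by
        intro k
        induction k with
        | zero => simp [gmom]
        | succ k ih =>
          have : 2 * (k+1) + 1 = (2*k+1) + 2 := by ring
          rw [this, gmom, ih, mul_zero]
      rw [hk, this]; simp
  | add P Q hP hQ =>
    simp only [map_add]
    rw [integral_add (eval_integrable b P) (eval_integrable b Q), hP, hQ]

theorem gE_mono (b : J → ℝ) (hb : ∀ j, 0 ≤ b j) (P Q : MvPolynomial J ℝ)
    (h : ∀ x, eval x P ≤ eval x Q) : gE b P ≤ gE b Q := by
  rw [gE_eq_integral b hb, gE_eq_integral b hb]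
  exact integral_mono (eval_integrable b P) (eval_integrable b Q) fun g => h _

theorem gE_abs_le (b : J → ℝ) (hb : ∀ j, 0 ≤ b j) (P Q : MvPolynomial J ℝ)
    (h : ∀ x, |eval x P| ≤ eval x Q) : |gE b P| ≤ gE b Q := by
  rw [abs_le]
  constructor
  · have := gE_mono b hb (-Q) P (fun x => by rw [map_neg]; exact (abs_le.1 (h x)).1)
    rwa [map_neg] at this
  · exact gE_mono b hb P Q (fun x => (abs_le.1 (h x)).2)

/-- variances for the coupling -/
noncomputable def cvar (b : J → ℝ) (τ : ℝ) : J × Fin 3 → ℝ :=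
  fun x => b x.1 * (if x.2 = 0 then τ else 1 - τ)

/-- first copy -/
noncomputable def cF : MvPolynomial J ℝ →ₐ[ℝ] MvPolynomial (J × Fin 3) ℝ :=
  aeval (fun j => X (j, 0) + X (j, 1))

/-- second copy -/
noncomputable def cG : MvPolynomial J ℝ →ₐ[ℝ] MvPolynomial (J × Fin 3) ℝ :=
  aeval (fun j => X (j, 0) + X (j, 2))

theorem pderiv_cF (j : J) (c : Fin 3) (P : MvPolynomial J ℝ) :
    pderiv (j, c) (cF P) = if c = 2 then 0 else cF (pderiv j P) := by
  classical
  rw [cF, pderiv_aeval', Finset.sum_eq_single j]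
  · fin_cases c <;> simp [pderiv_X, Pi.single_apply]
  · intro i _ h; simp [pderiv_X, Pi.single_apply, h]
  · simp

theorem pderiv_cG (j : J) (c : Fin 3) (P : MvPolynomial J ℝ) :
    pderiv (j, c) (cG P) = if c = 1 then 0 else cG (pderiv j P) := by
  classical
  rw [cG, pderiv_aeval', Finset.sum_eq_single j]
  · fin_cases c <;> simp [pderiv_X, Pi.single_apply]
  · intro i _ h; simp [pderiv_X, Pi.single_apply, h]
  · simp

theorem gE_cF (b : J → ℝ) (τ : ℝ) (P : MvPolynomial J ℝ) : gE (cvar b τ) (cF P) = gE b P := by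
  induction P using poly_ind with
  | h1 => rw [map_one, gE_one, gE_one]
  | hadd P Q hP hQ => simp only [map_add, hP, hQ]
  | hsmul a P hP => simp only [map_smul, hP]
  | hX i Q _ hQ =>
    have : cF (X i * Q) = X (i,0) * cF Q + X (i,1) * cF Q := by
      rw [map_mul, ← add_mul]; simp [cF]
    rw [this, map_add, gE_ibp, gE_ibp, gE_ibp, pderiv_cF, pderiv_cF, ← hQ]
    simp [cvar]; ring

theorem gE_cG (b : J → ℝ) (τ : ℝ) (P : MvPolynomial J ℝ) : gE (cvar b τ) (cG P) = gE b P := by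
  induction P using poly_ind with
  | h1 => rw [map_one, gE_one, gE_one]
  | hadd P Q hP hQ => simp only [map_add, hP, hQ]
  | hsmul a P hP => simp only [map_smul, hP]
  | hX i Q _ hQ =>
    have : cG (X i * Q) = X (i,0) * cG Q + X (i,2) * cG Q := by
      rw [map_mul, ← add_mul]; simp [cG]
    rw [this, map_add, gE_ibp, gE_ibp, gE_ibp, pderiv_cG, pderiv_cG, ← hQ]
    simp [cvar]; ring

theorem gE_c0 (b : J → ℝ) (Q P : MvPolynomial J ℝ) :
    gE (cvar b 0) (cF P * cG Q) = gE b P * gE b Q := by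
  induction P using poly_ind with
  | h1 => rw [map_one, one_mul, gE_cG, gE_one, one_mul]
  | hadd P Q hP hQ => simp only [map_add, hP, hQ, add_mul]
  | hsmul a P hP => simp only [map_smul, smul_mul_assoc, hP, smul_eq_mul, mul_assoc]
  | hX i P _ hP =>
    have : cF (X i * P) * cG Q = X (i,0) * (cF P * cG Q) + X (i,1) * (cF P * cG Q) := by
      rw [map_mul, ← add_mul, mul_assoc]; simp [cF]
    rw [this, map_add, gE_ibp, gE_ibp, gE_ibp, pderiv_mul, pderiv_mul, pderiv_cF, pderiv_cF,
      pderiv_cG, pderiv_cG]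
    simp [cvar, hP]; ring

theorem gE_c1 (b : J → ℝ) (P : MvPolynomial J ℝ) :
    ∀ Q, gE (cvar b 1) (cF P * cG Q) = gE b (P * Q) := by
  induction P using poly_ind with
  | h1 => intro Q; rw [map_one, one_mul, gE_cG, one_mul]
  | hadd P P' hP hQ => intro Q; simp only [map_add, hP, hQ, add_mul]
  | hsmul a P hP => intro Q; simp only [map_smul, smul_mul_assoc, hP, smul_eq_mul, mul_assoc]
  | hX i P h0 hP =>
    intro Q
    have : cF (X i * P) * cG Q = X (i,0) * (cF P * cG Q) + X (i,1) * (cF P * cG Q) := by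
      rw [map_mul, ← add_mul, mul_assoc]; simp [cF]
    rw [this, map_add, gE_ibp, gE_ibp, mul_assoc, gE_ibp, pderiv_mul, pderiv_mul, pderiv_cF, pderiv_cF,
      pderiv_cG, pderiv_cG, pderiv_mul]
    simp [cvar, hP, h0]

theorem gE_cov_deriv (b : J → ℝ) (P Q : MvPolynomial J ℝ) (τ : ℝ) :
    HasDerivAt (fun τ => gE (cvar b τ) (cF P * cG Q))
      (∑ j, b j * gE (cvar b τ) (cF (pderiv j P) * cG (pderiv j Q))) τ := by
  refine (gE_hasDerivAt (cvar b) (fun x => b x.1 * (if x.2 = 0 then 1 else -1)) τ ?_ _).congr_deriv ?_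
  · rintro ⟨j, c⟩
    simp only [cvar]
    apply HasDerivAt.const_mul
    split_ifs
    · exact hasDerivAt_id τ
    · simpa using (hasDerivAt_id τ).const_sub 1
  · rw [Fintype.sum_prod_type, Finset.mul_sum]
    refine Finset.sum_congr rfl fun j _ => ?_
    rw [Fin.sum_univ_three]
    simp [pderiv_mul, pderiv_cF, pderiv_cG]
    ring_nf

end GaussIntegral


section Crossing
open Matrix

variable {ι J : Type*} [Fintype ι] [DecidableEq ι] [Fintype J]

/-- squared Euclidean norm -/
def nsq {ι : Type*} [Fintype ι] (x : ι → ℝ) : ℝ := ∑ i, x i ^ 2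

/-- squared Frobenius norm -/
def fsq {ι : Type*} [Fintype ι] (M : Matrix ι ι ℝ) : ℝ := ∑ i, ∑ j, M i j ^ 2

/-- Frobenius pairing -/
def fip {ι : Type*} [Fintype ι] (M K : Matrix ι ι ℝ) : ℝ := ∑ i, ∑ j, M i j * K i j

theorem nsq_nonneg (x : ι → ℝ) : 0 ≤ nsq x := Finset.sum_nonneg fun _ _ => sq_nonneg _

theorem fsq_nonneg (M : Matrix ι ι ℝ) : 0 ≤ fsq M :=
  Finset.sum_nonneg fun _ _ => Finset.sum_nonneg fun _ _ => sq_nonneg _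

/-- A weighted family of matrices with variance parameters. -/
structure Fam (b : J → ℝ) (L : J → Matrix ι ι ℝ) (v2 s2 : ℝ) : Prop where
  hb : ∀ j, 0 ≤ b j
  hv0 : 0 ≤ v2
  hs0 : 0 ≤ s2
  hv : ∀ M, ∑ j, b j * (fip (L j) M) ^ 2 ≤ v2 * fsq M
  hr : ∀ x, ∑ j, b j * nsq ((L j)ᵀ *ᵥ x) ≤ s2 * nsq x
  hc : ∀ x, ∑ j, b j * nsq ((L j) *ᵥ x) ≤ s2 * nsq x

/-- contraction -/
def Contr (S : Matrix ι ι ℝ) : Prop :=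
  (∀ x, nsq (S *ᵥ x) ≤ nsq x) ∧ (∀ x, nsq (Sᵀ *ᵥ x) ≤ nsq x)

theorem Contr.tr {S : Matrix ι ι ℝ} (h : Contr S) : Contr Sᵀ := ⟨h.2, by simpa using h.1⟩

theorem fsq_transpose (M : Matrix ι ι ℝ) : fsq Mᵀ = fsq M := by
  simp only [fsq, transpose_apply]; exact Finset.sum_comm

theorem fsq_mul_left {S : Matrix ι ι ℝ} (h : Contr S) (M : Matrix ι ι ℝ) : fsq (S * M) ≤ fsq M := by
  rw [← fsq_transpose, ← fsq_transpose M]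
  refine Finset.sum_le_sum fun j _ => ?_
  exact h.1 (fun i => M i j)

theorem fsq_mul_right {S : Matrix ι ι ℝ} (h : Contr S) (M : Matrix ι ι ℝ) : fsq (M * S) ≤ fsq M := by
  rw [← fsq_transpose, transpose_mul, ← fsq_transpose M]
  exact fsq_mul_left h.tr _

theorem fip_eq_trace (M K : Matrix ι ι ℝ) : fip M K = trace (Mᵀ * K) := by
  simp only [fip, trace, diag, mul_apply, transpose_apply]
  exact Finset.sum_comm

theorem fip_mul (S V L M : Matrix ι ι ℝ) : fip (S * L * V) M = fip L (Sᵀ * M * Vᵀ) := by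
  simp only [fip_eq_trace, transpose_mul]
  rw [Matrix.mul_assoc, Matrix.trace_mul_comm]
  simp only [Matrix.mul_assoc]

theorem Fam.trans {b : J → ℝ} {L : J → Matrix ι ι ℝ} {v2 s2 : ℝ} (h : Fam b L v2 s2)
    {S V : Matrix ι ι ℝ} (hS : Contr S) (hV : Contr V) : Fam b (fun j => S * L j * V) v2 s2 where
  hb := h.hb
  hv0 := h.hv0
  hs0 := h.hs0
  hv M := by
    simp only [fip_mul]
    refine (h.hv _).trans (mul_le_mul_of_nonneg_left ?_ h.hv0)
    exact (fsq_mul_right hV.tr _).trans (fsq_mul_left hS.tr _)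
  hr x := by
    have : ∀ j, b j * nsq ((S * L j * V)ᵀ *ᵥ x) ≤ b j * nsq ((L j)ᵀ *ᵥ (Sᵀ *ᵥ x)) := by
      intro j
      refine mul_le_mul_of_nonneg_left ?_ (h.hb j)
      rw [transpose_mul, transpose_mul, ← mulVec_mulVec, ← mulVec_mulVec]
      exact hV.2 _
    refine (Finset.sum_le_sum fun j _ => this j).trans ((h.hr _).trans ?_)
    exact mul_le_mul_of_nonneg_left (hS.2 _) h.hs0
  hc x := by
    have : ∀ j, b j * nsq ((S * L j * V) *ᵥ x) ≤ b j * nsq ((L j) *ᵥ (V *ᵥ x)) := by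
      intro j
      refine mul_le_mul_of_nonneg_left ?_ (h.hb j)
      rw [← mulVec_mulVec, ← mulVec_mulVec]
      exact hS.1 _
    refine (Finset.sum_le_sum fun j _ => this j).trans ((h.hc _).trans ?_)
    exact mul_le_mul_of_nonneg_left (hV.1 _) h.hs0

theorem Fam.dual {b : J → ℝ} {L : J → Matrix ι ι ℝ} {v2 s2 : ℝ} (h : Fam b L v2 s2) (y : J → ℝ) :
    ∑ z, ∑ w, (∑ j, b j * y j * L j z w) ^ 2 ≤ v2 * ∑ j, b j * y j ^ 2 := by
  set M : Matrix ι ι ℝ := Matrix.of fun z w => ∑ j, b j * y j * L j z w with hM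
  have e : ∑ z, ∑ w, (∑ j, b j * y j * L j z w) ^ 2 = fsq M := rfl
  rw [e]
  have F : fsq M = ∑ j, (Real.sqrt (b j) * y j) * (Real.sqrt (b j) * fip (L j) M) := by
    have h1 : ∀ j, (Real.sqrt (b j) * y j) * (Real.sqrt (b j) * fip (L j) M)
        = ∑ z, ∑ w, (b j * y j * L j z w) * M z w := by
      intro j
      have := Real.mul_self_sqrt (h.hb j)
      calc _ = (Real.sqrt (b j) * Real.sqrt (b j)) * y j * fip (L j) M := by ring
        _ = _ := by
          rw [this, fip]; simp only [Finset.mul_sum]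
          refine Finset.sum_congr rfl fun _ _ => Finset.sum_congr rfl fun _ _ => by ring
    rw [Finset.sum_congr rfl fun j _ => h1 j, Finset.sum_comm, fsq]
    refine Finset.sum_congr rfl fun z _ => ?_
    rw [Finset.sum_comm]
    refine Finset.sum_congr rfl fun w _ => ?_
    rw [← Finset.sum_mul, sq]; rfl
  have cs := Finset.sum_mul_sq_le_sq_mul_sq Finset.univ (fun j => Real.sqrt (b j) * y j)
    (fun j => Real.sqrt (b j) * fip (L j) M)
  rw [← F] at cs
  simp only [mul_pow, Real.sq_sqrt (h.hb _)] at cs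
  have h2 := h.hv M
  have hY : 0 ≤ ∑ j, b j * y j ^ 2 := Finset.sum_nonneg fun j _ => mul_nonneg (h.hb j) (sq_nonneg _)
  rcases (fsq_nonneg M).eq_or_lt with h0 | h0
  · rw [← h0]; exact mul_nonneg h.hv0 hY
  · have : fsq M ^ 2 ≤ (∑ j, b j * y j ^ 2) * (v2 * fsq M) :=
      cs.trans (mul_le_mul_of_nonneg_left h2 hY)
    nlinarith

theorem nsq_single (M : Matrix ι ι ℝ) (x : ι) : nsq (M *ᵥ (Pi.single x 1)) = ∑ y, M y x ^ 2 := by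
  simp [nsq, mulVec_single]

theorem nsq_single1 (x : ι) : nsq (Pi.single x 1 : ι → ℝ) = 1 := by
  rw [nsq, Finset.sum_eq_single x]
  · simp
  · intro y _ h; simp [h]
  · simp

/-- the mixed covariance tensor -/
def ten (b : J → ℝ) (P Q : J → Matrix ι ι ℝ) (x y z w : ι) : ℝ := ∑ j, b j * P j x y * Q j z w

theorem ten_swap (b : J → ℝ) (P Q : J → Matrix ι ι ℝ) (x y z w : ι) :
    ten b P Q x y z w = ten b Q P z w x y := by
  refine Finset.sum_congr rfl fun j _ => by ring

theorem ten_fst {b : J → ℝ} {P Q : J → Matrix ι ι ℝ} {v2 s2 : ℝ} (hP : Fam b P v2 s2)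
    (hQ : Fam b Q v2 s2) (x : ι) : ∑ y, ∑ z, ∑ w, ten b P Q x y z w ^ 2 ≤ v2 * s2 := by
  calc _ ≤ ∑ y, v2 * ∑ j, b j * P j x y ^ 2 := Finset.sum_le_sum fun y _ => hQ.dual (fun j => P j x y)
    _ = v2 * ∑ j, b j * nsq ((P j)ᵀ *ᵥ (Pi.single x 1)) := by
      rw [← Finset.mul_sum, Finset.sum_comm]
      simp only [nsq_single, Finset.mul_sum, transpose_apply]
    _ ≤ v2 * s2 := by
      refine mul_le_mul_of_nonneg_left ((hP.hr _).trans ?_) hP.hv0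
      rw [nsq_single1, mul_one]

theorem ten_snd {b : J → ℝ} {P Q : J → Matrix ι ι ℝ} {v2 s2 : ℝ} (hP : Fam b P v2 s2)
    (hQ : Fam b Q v2 s2) (y : ι) : ∑ x, ∑ z, ∑ w, ten b P Q x y z w ^ 2 ≤ v2 * s2 := by
  calc _ ≤ ∑ x, v2 * ∑ j, b j * P j x y ^ 2 := Finset.sum_le_sum fun x _ => hQ.dual (fun j => P j x y)
    _ = v2 * ∑ j, b j * nsq ((P j) *ᵥ (Pi.single y 1)) := by
      rw [← Finset.mul_sum, Finset.sum_comm]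
      simp only [nsq_single, Finset.mul_sum]
    _ ≤ v2 * s2 := by
      refine mul_le_mul_of_nonneg_left ((hP.hc _).trans ?_) hP.hv0
      rw [nsq_single1, mul_one]

theorem cs3 (f g : ι → ι → ι → ℝ) (K : ℝ) (hK : 0 ≤ K)
    (hf : ∑ x, ∑ y, ∑ z, f x y z ^ 2 ≤ K) (hg : ∑ x, ∑ y, ∑ z, g x y z ^ 2 ≤ K) :
    ∑ x, ∑ y, ∑ z, |f x y z * g x y z| ≤ K := by
  have : ∀ x y z, |f x y z * g x y z| ≤ 1/2 * f x y z ^ 2 + 1/2 * g x y z ^ 2 := by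
    intro x y z
    rw [abs_mul]
    have := sq_abs (f x y z); have := sq_abs (g x y z)
    nlinarith [sq_nonneg (|f x y z| - |g x y z|)]
  calc _ ≤ ∑ x, ∑ y, ∑ z, (1/2 * f x y z ^ 2 + 1/2 * g x y z ^ 2) :=
      Finset.sum_le_sum fun x _ => Finset.sum_le_sum fun y _ => Finset.sum_le_sum fun z _ => this x y z
    _ = 1/2 * ∑ x, ∑ y, ∑ z, f x y z ^ 2 + 1/2 * ∑ x, ∑ y, ∑ z, g x y z ^ 2 := by
      simp only [Finset.sum_add_distrib, Finset.mul_sum]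
    _ ≤ K := by linarith

theorem pow_prod_le (a b c d : ℕ) (x y z w : ℝ) (hx : 0 ≤ x) (hy : 0 ≤ y) (hz : 0 ≤ z) (hw : 0 ≤ w) :
    x ^ a * y ^ b * z ^ c * w ^ d ≤
      x ^ (a+b+c+d) + y ^ (a+b+c+d) + z ^ (a+b+c+d) + w ^ (a+b+c+d) := by
  set M := max (max x y) (max z w) with hM
  have h1 : x ≤ M := by simp [hM]
  have h2 : y ≤ M := by simp [hM]
  have h3 : z ≤ M := by simp [hM]
  have h4 : w ≤ M := by simp [hM]
  have hM0 : 0 ≤ M := hx.trans h1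
  have : x ^ a * y ^ b * z ^ c * w ^ d ≤ M ^ (a+b+c+d) := by
    rw [pow_add, pow_add, pow_add]
    gcongr
  refine this.trans ?_
  have p1 := pow_nonneg hx (a+b+c+d)
  have p2 := pow_nonneg hy (a+b+c+d)
  have p3 := pow_nonneg hz (a+b+c+d)
  have p4 := pow_nonneg hw (a+b+c+d)
  have : M = x ∨ M = y ∨ M = z ∨ M = w := by
    rw [hM]
    rcases max_choice (max x y) (max z w) with h | h <;> rw [h]
    · rcases max_choice x y with h | h <;> rw [h] <;> simp
    · rcases max_choice z w with h | h <;> rw [h] <;> simp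
  rcases this with h | h | h | h <;> rw [h] <;> linarith

/-- sum bound with one distinguished index -/
theorem cross_abs {b b' : J → ℝ} {P Q P' Q' : J → Matrix ι ι ℝ} {v2 s2 : ℝ}
    (hP : Fam b P v2 s2) (hQ : Fam b Q v2 s2) (hP' : Fam b' P' v2 s2) (hQ' : Fam b' Q' v2 s2)
    (l m : ι → ℝ) (a b₁ c d : ℕ) :
    |∑ α, ∑ β, ∑ γ, ∑ δ, (l α ^ a * l β ^ b₁ * m γ ^ c * m δ ^ d) *
      (ten b P Q δ α β γ * ten b' P' Q' α β γ δ)| ≤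
    v2 * s2 * (2 * (∑ α, |l α| ^ (a+b₁+c+d) + ∑ α, |m α| ^ (a+b₁+c+d))) := by
  have hK : 0 ≤ v2 * s2 := mul_nonneg hP.hv0 hP.hs0
  set N := a+b₁+c+d with hN
  set W : ι → ι → ι → ι → ℝ := fun α β γ δ => |ten b P Q δ α β γ * ten b' P' Q' α β γ δ| with hW
  have step1 : |∑ α, ∑ β, ∑ γ, ∑ δ, (l α ^ a * l β ^ b₁ * m γ ^ c * m δ ^ d) *
      (ten b P Q δ α β γ * ten b' P' Q' α β γ δ)| ≤
      ∑ α, ∑ β, ∑ γ, ∑ δ, (|l α| ^ N * W α β γ δ + |l β| ^ N * W α β γ δ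
        + |m γ| ^ N * W α β γ δ + |m δ| ^ N * W α β γ δ) := by
    refine (Finset.abs_sum_le_sum_abs _ _).trans (Finset.sum_le_sum fun α _ => ?_)
    refine (Finset.abs_sum_le_sum_abs _ _).trans (Finset.sum_le_sum fun β _ => ?_)
    refine (Finset.abs_sum_le_sum_abs _ _).trans (Finset.sum_le_sum fun γ _ => ?_)
    refine (Finset.abs_sum_le_sum_abs _ _).trans (Finset.sum_le_sum fun δ _ => ?_)
    rw [abs_mul, ← add_mul, ← add_mul, ← add_mul]
    refine mul_le_mul_of_nonneg_right ?_ (abs_nonneg _)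
    rw [abs_mul, abs_mul, abs_mul, abs_pow, abs_pow, abs_pow, abs_pow]
    exact pow_prod_le _ _ _ _ _ _ _ _ (abs_nonneg _) (abs_nonneg _) (abs_nonneg _) (abs_nonneg _)
  refine step1.trans ?_
  simp only [Finset.sum_add_distrib]
  -- fixed α
  have A1 : ∀ α, ∑ β, ∑ γ, ∑ δ, W α β γ δ ≤ v2 * s2 := by
    intro α
    refine cs3 (fun β γ δ => ten b P Q δ α β γ) (fun β γ δ => ten b' P' Q' α β γ δ) _ hK ?_
      (ten_fst hP' hQ' α)
    have := ten_snd hP hQ α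
    rw [Finset.sum_comm] at this
    refine le_trans (le_of_eq ?_) this
    refine Finset.sum_congr rfl fun β _ => ?_
    rw [Finset.sum_comm]
  have A2 : ∀ β, ∑ α, ∑ γ, ∑ δ, W α β γ δ ≤ v2 * s2 := by
    intro β
    refine cs3 (fun α γ δ => ten b P Q δ α β γ) (fun α γ δ => ten b' P' Q' α β γ δ) _ hK ?_
      (ten_snd hP' hQ' β)
    have := ten_fst hQ hP β
    simp only [← ten_swap b P Q] at this
    refine le_trans (le_of_eq ?_) this
    rw [Finset.sum_comm]
    refine Finset.sum_congr rfl fun γ _ => ?_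
    rw [Finset.sum_comm]
  have A3 : ∀ γ, ∑ α, ∑ β, ∑ δ, W α β γ δ ≤ v2 * s2 := by
    intro γ
    refine cs3 (fun α β δ => ten b P Q δ α β γ) (fun α β δ => ten b' P' Q' α β γ δ) _ hK ?_ ?_
    · have := ten_snd hQ hP γ
      simp only [← ten_swap b P Q] at this
      refine le_trans (le_of_eq ?_) this
      rw [Finset.sum_comm]
      refine Finset.sum_congr rfl fun β _ => ?_
      rw [Finset.sum_comm]
    · have := ten_fst hQ' hP' γ
      simp only [← ten_swap b' P' Q'] at this
      refine le_trans (le_of_eq ?_) this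
      rw [Finset.sum_comm' (t' := Finset.univ) (s' := fun _ => Finset.univ) (by simp)]
      rw [Finset.sum_comm]
      have : ∀ α, ∑ y, ∑ x, ten b' P' Q' α y γ x ^ 2 = ∑ x, ∑ y, ten b' P' Q' α y γ x ^ 2 :=
        fun α => Finset.sum_comm
      simp only [this]
      rw [Finset.sum_comm]
  have A4 : ∀ δ, ∑ α, ∑ β, ∑ γ, W α β γ δ ≤ v2 * s2 := by
    intro δ
    refine cs3 (fun α β γ => ten b P Q δ α β γ) (fun α β γ => ten b' P' Q' α β γ δ) _ hK
      (ten_fst hP hQ δ) ?_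
    have := ten_snd hQ' hP' δ
    simp only [← ten_swap b' P' Q'] at this
    refine le_trans (le_of_eq ?_) this
    have h2 : ∀ α, ∑ β, ∑ γ, ten b' P' Q' α β γ δ ^ 2 = ∑ γ, ∑ β, ten b' P' Q' α β γ δ ^ 2 :=
        fun α => Finset.sum_comm
    simp only [h2]
    rw [Finset.sum_comm]
  have B1 : ∑ α, ∑ β, ∑ γ, ∑ δ, |l α| ^ N * W α β γ δ ≤ ∑ α, |l α| ^ N * (v2 * s2) := by
    refine Finset.sum_le_sum fun α _ => ?_
    simp only [← Finset.mul_sum]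
    exact mul_le_mul_of_nonneg_left (A1 α) (by positivity)
  have B2 : ∑ α, ∑ β, ∑ γ, ∑ δ, |l β| ^ N * W α β γ δ ≤ ∑ α, |l α| ^ N * (v2 * s2) := by
    rw [Finset.sum_comm]
    refine Finset.sum_le_sum fun α _ => ?_
    simp only [← Finset.mul_sum]
    exact mul_le_mul_of_nonneg_left (A2 α) (by positivity)
  have B3 : ∑ α, ∑ β, ∑ γ, ∑ δ, |m γ| ^ N * W α β γ δ ≤ ∑ α, |m α| ^ N * (v2 * s2) := by
    have h2 : ∀ α, ∑ β, ∑ γ, ∑ δ, |m γ| ^ N * W α β γ δ = ∑ γ, ∑ β, ∑ δ, |m γ| ^ N * W α β γ δ :=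
      fun α => Finset.sum_comm
    simp only [h2]
    rw [Finset.sum_comm]
    refine Finset.sum_le_sum fun α _ => ?_
    simp only [← Finset.mul_sum]
    exact mul_le_mul_of_nonneg_left (A3 α) (by positivity)
  have B4 : ∑ α, ∑ β, ∑ γ, ∑ δ, |m δ| ^ N * W α β γ δ ≤ ∑ α, |m α| ^ N * (v2 * s2) := by
    have h2 : ∀ α β, ∑ γ, ∑ δ, |m δ| ^ N * W α β γ δ = ∑ δ, ∑ γ, |m δ| ^ N * W α β γ δ :=
      fun α β => Finset.sum_comm
    simp only [h2]
    have h3 : ∀ α, ∑ β, ∑ δ, ∑ γ, |m δ| ^ N * W α β γ δ = ∑ δ, ∑ β, ∑ γ, |m δ| ^ N * W α β γ δ :=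
      fun α => Finset.sum_comm
    simp only [h3]
    rw [Finset.sum_comm]
    refine Finset.sum_le_sum fun α _ => ?_
    simp only [← Finset.mul_sum]
    exact mul_le_mul_of_nonneg_left (A4 α) (by positivity)
  rw [← Finset.sum_mul] at B1 B2 B3 B4
  linarith

/-- spectral decomposition of a real symmetric matrix -/
theorem spec (Z : Matrix ι ι ℝ) (h : Z.IsSymm) : ∃ (U : Matrix ι ι ℝ) (l : ι → ℝ),
    U * Uᵀ = 1 ∧ Uᵀ * U = 1 ∧ Z = U * diagonal l * Uᵀ := by
  have hH : Z.IsHermitian := by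
    rw [Matrix.IsHermitian, conjTranspose_eq_transpose_of_trivial]; exact h
  refine ⟨hH.eigenvectorUnitary, hH.eigenvalues, ?_, ?_, ?_⟩
  · have := Matrix.mem_unitaryGroup_iff.1 hH.eigenvectorUnitary.2
    rwa [star_eq_conjTranspose, conjTranspose_eq_transpose_of_trivial] at this
  · have := Matrix.mem_unitaryGroup_iff'.1 hH.eigenvectorUnitary.2
    rwa [star_eq_conjTranspose, conjTranspose_eq_transpose_of_trivial] at this
  · have := hH.spectral_theorem
    rw [Unitary.conjStarAlgAut_apply, star_eq_conjTranspose, conjTranspose_eq_transpose_of_trivial] at this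
    exact this

theorem spec_pow {U : Matrix ι ι ℝ} {l : ι → ℝ} (hU : Uᵀ * U = 1) (hU' : U * Uᵀ = 1) (k : ℕ) :
    (U * diagonal l * Uᵀ) ^ k = U * diagonal (fun i => l i ^ k) * Uᵀ := by
  induction k with
  | zero => simp [hU']
  | succ k ih =>
    rw [pow_succ, ih]
    calc _ = U * diagonal (fun i => l i ^ k) * (Uᵀ * U) * diagonal l * Uᵀ := by
          simp only [Matrix.mul_assoc]
      _ = _ := by
        rw [hU, Matrix.mul_one, Matrix.mul_assoc U, diagonal_mul_diagonal]; rfl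

theorem spec_trace {U : Matrix ι ι ℝ} {l : ι → ℝ} (hU : Uᵀ * U = 1) (hU' : U * Uᵀ = 1) (k : ℕ) :
    trace ((U * diagonal l * Uᵀ) ^ k) = ∑ i, l i ^ k := by
  rw [spec_pow hU hU', Matrix.trace_mul_comm, ← Matrix.mul_assoc, hU, Matrix.one_mul, trace_diagonal]

theorem contr_orth {U : Matrix ι ι ℝ} (hU : Uᵀ * U = 1) (hU' : U * Uᵀ = 1) : Contr U := by
  have key : ∀ (V : Matrix ι ι ℝ), Vᵀ * V = 1 → ∀ x, nsq (V *ᵥ x) ≤ nsq x := by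
    intro V hV x
    have e : ∀ y : ι → ℝ, nsq y = y ⬝ᵥ y := fun y => by simp [nsq, dotProduct, sq]
    rw [e, e, dotProduct_mulVec, vecMul_mulVec, ]
    simp [hV]
  exact ⟨key U hU, key Uᵀ (by simpa using hU')⟩

theorem trace_diag4 (A B C D : Matrix ι ι ℝ) (p q r s : ι → ℝ) :
    trace (A * diagonal p * B * diagonal q * C * diagonal r * D * diagonal s)
      = ∑ α, ∑ β, ∑ γ, ∑ δ, (p α * q β * r γ * s δ) * (A δ α * C β γ * (B α β * D γ δ)) := by
  have : ∀ δ, (A * diagonal p * B * diagonal q * C * diagonal r * D * diagonal s) δ δ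
      = ∑ γ, ∑ β, ∑ α, (p α * q β * r γ * s δ) * (A δ α * C β γ * (B α β * D γ δ)) := by
    intro δ
    rw [mul_diagonal, mul_apply, Finset.sum_mul]
    refine Finset.sum_congr rfl fun γ _ => ?_
    rw [mul_diagonal, mul_apply, Finset.sum_mul, Finset.sum_mul, Finset.sum_mul]
    refine Finset.sum_congr rfl fun β _ => ?_
    rw [mul_diagonal, mul_apply, Finset.sum_mul, Finset.sum_mul, Finset.sum_mul, Finset.sum_mul,
      Finset.sum_mul]
    refine Finset.sum_congr rfl fun α _ => ?_
    rw [mul_diagonal]; ring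
  simp only [trace, diag, this]
  rw [Finset.sum_comm]
  calc _ = ∑ γ, ∑ β, ∑ δ, ∑ α, (p α * q β * r γ * s δ) * (A δ α * C β γ * (B α β * D γ δ)) := by
        refine Finset.sum_congr rfl fun γ _ => ?_
        rw [Finset.sum_comm]
    _ = ∑ γ, ∑ β, ∑ α, ∑ δ, (p α * q β * r γ * s δ) * (A δ α * C β γ * (B α β * D γ δ)) := by
        refine Finset.sum_congr rfl fun γ _ => Finset.sum_congr rfl fun β _ => ?_
        rw [Finset.sum_comm]
    _ = ∑ γ, ∑ α, ∑ β, ∑ δ, (p α * q β * r γ * s δ) * (A δ α * C β γ * (B α β * D γ δ)) := by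
        refine Finset.sum_congr rfl fun γ _ => ?_
        rw [Finset.sum_comm]
    _ = ∑ α, ∑ γ, ∑ β, ∑ δ, (p α * q β * r γ * s δ) * (A δ α * C β γ * (B α β * D γ δ)) := by
        rw [Finset.sum_comm]
    _ = _ := by
        refine Finset.sum_congr rfl fun γ _ => ?_
        rw [Finset.sum_comm]

theorem crossing {b b' : J → ℝ} {L : J → Matrix ι ι ℝ} {v2 s2 : ℝ}
    (h : Fam b L v2 s2) (h' : Fam b' L v2 s2) {R : Matrix ι ι ℝ} (hR : Contr R)
    {U V : Matrix ι ι ℝ} {l m : ι → ℝ} (hU : Uᵀ * U = 1) (hU' : U * Uᵀ = 1)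
    (hV : Vᵀ * V = 1) (hV' : V * Vᵀ = 1) {Z1 Z2 : Matrix ι ι ℝ} (hZ1 : Z1 = U * diagonal l * Uᵀ)
    (hZ2 : Z2 = V * diagonal m * Vᵀ) (a b₁ c d : ℕ) :
    |∑ j, ∑ j', b j * b' j' *
      trace (R * L j * Z1 ^ a * L j' * Z1 ^ b₁ * L j * Z2 ^ c * L j' * Z2 ^ d)| ≤
    v2 * s2 * (2 * (∑ α, |l α| ^ (a+b₁+c+d) + ∑ α, |m α| ^ (a+b₁+c+d))) := by
  have hUc := contr_orth hU hU'
  have hVc := contr_orth hV hV'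
  have hRV : Contr (Vᵀ * R) := by
    constructor
    · intro x; rw [← mulVec_mulVec]; exact (hVc.2 _).trans (hR.1 _)
    · intro x; rw [transpose_mul, transpose_transpose, ← mulVec_mulVec]; exact (hR.2 _).trans (hVc.1 _)
  have key := cross_abs (h.trans hRV hUc) (h.trans hUc.tr hVc) (h'.trans hUc.tr hUc)
    (h'.trans hVc.tr hVc) l m a b₁ c d
  refine le_trans (le_of_eq ?_) key
  congr 1
  have e : ∀ j j', trace (R * L j * Z1 ^ a * L j' * Z1 ^ b₁ * L j * Z2 ^ c * L j' * Z2 ^ d)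
      = trace ((Vᵀ * R * L j * U) * diagonal (fun i => l i ^ a) * (Uᵀ * L j' * U) *
        diagonal (fun i => l i ^ b₁) * (Uᵀ * L j * V) * diagonal (fun i => m i ^ c) *
        (Vᵀ * L j' * V) * diagonal (fun i => m i ^ d)) := by
    intro j j'
    rw [hZ1, hZ2, spec_pow hU hU', spec_pow hU hU', spec_pow hV hV', spec_pow hV hV']
    simp only [← Matrix.mul_assoc]
    rw [Matrix.trace_mul_comm]
    simp only [← Matrix.mul_assoc]
  simp only [e, trace_diag4, ten]
  simp only [Finset.mul_sum, Finset.sum_mul]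
  -- move j sums inside
  have g1 : ∀ (f : J → J → ι → ι → ι → ι → ℝ), ∑ j, ∑ j', ∑ α, ∑ β, ∑ γ, ∑ δ, f j j' α β γ δ
      = ∑ α, ∑ β, ∑ γ, ∑ δ, ∑ j', ∑ j, f j j' α β γ δ := by
    intro f
    simp only [← Fintype.sum_prod_type']
    exact Fintype.sum_equiv ⟨fun x => (x.2.2.1, x.2.2.2.1, x.2.2.2.2.1, x.2.2.2.2.2, x.2.1, x.1),
      fun y => (y.2.2.2.2.2, y.2.2.2.2.1, y.1, y.2.1, y.2.2.1, y.2.2.2.1), fun _ => rfl, fun _ => rfl⟩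
      _ _ (fun _ => rfl)
  rw [g1]
  refine Finset.sum_congr rfl fun α _ => Finset.sum_congr rfl fun β _ => Finset.sum_congr rfl fun γ _ =>
    Finset.sum_congr rfl fun δ _ => Finset.sum_congr rfl fun j' _ => Finset.sum_congr rfl fun j _ => ?_
  ring

end Crossing


section PolyMat
open Matrix MvPolynomial

variable {ι J : Type*} [Fintype ι] [DecidableEq ι] [Fintype J]

/-- generic linear combination as a polynomial matrix -/
noncomputable def Zp (L : J → Matrix ι ι ℝ) : Matrix ι ι (MvPolynomial J ℝ) :=
  ∑ j, (X j : MvPolynomial J ℝ) • (L j).map C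

/-- constant matrices -/
noncomputable def cm (M : Matrix ι ι ℝ) : Matrix ι ι (MvPolynomial J ℝ) := M.map C

/-- real linear combination -/
noncomputable def Zr (L : J → Matrix ι ι ℝ) (x : J → ℝ) : Matrix ι ι ℝ := ∑ j, x j • L j

/-- entrywise expectation -/
noncomputable def Em (b : J → ℝ) (M : Matrix ι ι (MvPolynomial J ℝ)) : Matrix ι ι ℝ := M.map (gE b)

theorem cm_mul (M N : Matrix ι ι ℝ) : (cm (M * N) : Matrix ι ι (MvPolynomial J ℝ)) = cm M * cm N :=
  Matrix.map_mul

theorem ev_Zp (L : J → Matrix ι ι ℝ) (x : J → ℝ) : (eval x).mapMatrix (Zp L) = Zr L x := by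
  ext a b
  simp [Zp, Zr, Matrix.sum_apply]

theorem ev_cm (x : J → ℝ) (M : Matrix ι ι ℝ) : (eval x).mapMatrix (cm M) = M := by
  ext a b
  simp [cm]

theorem Zr_symm {L : J → Matrix ι ι ℝ} (hL : ∀ j, (L j).IsSymm) (x : J → ℝ) : (Zr L x).IsSymm := by
  rw [Matrix.IsSymm, Zr, Matrix.transpose_sum]
  refine Finset.sum_congr rfl fun j _ => ?_
  rw [Matrix.transpose_smul, hL j]

/-- entrywise derivative -/
noncomputable def pm (j : J) (M : Matrix ι ι (MvPolynomial J ℝ)) : Matrix ι ι (MvPolynomial J ℝ) :=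
  M.map (pderiv j)

theorem pm_mul (j : J) (M N : Matrix ι ι (MvPolynomial J ℝ)) : pm j (M * N) = pm j M * N + M * pm j N := by
  ext a b : 1
  simp only [pm, Matrix.map_apply, Matrix.mul_apply, Matrix.add_apply, map_sum, Derivation.leibniz,
    smul_eq_mul, Finset.sum_add_distrib]
  rw [add_comm]
  congr 1
  exact Finset.sum_congr rfl fun _ _ => mul_comm _ _

theorem pm_cm (j : J) (M : Matrix ι ι ℝ) : pm j (cm M) = 0 := by
  ext a b : 1
  simp [pm, cm]

theorem pm_Zp (L : J → Matrix ι ι ℝ) (j : J) : pm j (Zp L) = cm (L j) := by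
  classical
  ext a b : 1
  simp only [pm, cm, Zp, Matrix.map_apply, Matrix.sum_apply, Matrix.smul_apply, map_sum, smul_eq_mul,
    Derivation.leibniz, pderiv_C, smul_zero, zero_add]
  rw [Finset.sum_eq_single j]
  · simp
  · intro k _ h; simp [pderiv_X_of_ne h]
  · simp

theorem pm_sum {α : Type*} (s : Finset α) (j : J) (f : α → Matrix ι ι (MvPolynomial J ℝ)) :
    pm j (∑ i ∈ s, f i) = ∑ i ∈ s, pm j (f i) := by
  ext a b : 1
  simp [pm, Matrix.sum_apply]

theorem pm_pow (L : J → Matrix ι ι ℝ) (j : J) (k : ℕ) :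
    pm j (Zp L ^ k) = ∑ i ∈ Finset.range k, Zp L ^ i * cm (L j) * Zp L ^ (k - 1 - i) := by
  induction k with
  | zero =>
    have := pm_cm j (1 : Matrix ι ι ℝ)
    simp only [pow_zero, Finset.range_zero, Finset.sum_empty]
    rw [← this, cm, Matrix.map_one _ (map_zero _) (map_one _)]
  | succ k ih =>
    have e1 : ∀ i ∈ Finset.range k, Zp L ^ i * cm (L j) * Zp L ^ (k - 1 - i) * Zp L
        = Zp L ^ i * cm (L j) * Zp L ^ (k + 1 - 1 - i) := by
      intro i hi
      have := Finset.mem_range.1 hi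
      have e : k + 1 - 1 - i = (k - 1 - i) + 1 := by omega
      rw [e, pow_succ (Zp L) (k - 1 - i), Matrix.mul_assoc _ _ (Zp L)]
    have e2 : Zp L ^ k * cm (L j) = Zp L ^ k * cm (L j) * Zp L ^ (k + 1 - 1 - k) := by
      rw [show k + 1 - 1 - k = 0 by omega, pow_zero, Matrix.mul_one]
    rw [pow_succ, pm_mul, ih, pm_Zp, Finset.sum_range_succ, Finset.sum_mul, Finset.sum_congr rfl e1, ← e2]

theorem ev_pderiv_pow (L : J → Matrix ι ι ℝ) (j : J) (k : ℕ) (x : J → ℝ) (a b : ι) :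
    eval x (pderiv j ((Zp L ^ k) a b)) =
      (∑ i ∈ Finset.range k, Zr L x ^ i * L j * Zr L x ^ (k - 1 - i)) a b := by
  have := congrArg (eval x).mapMatrix (pm_pow L j k)
  simp only [map_sum, map_mul, map_pow, ev_Zp, ev_cm] at this
  rw [← this]
  rfl

theorem ev_cF (y : J × Fin 3 → ℝ) (P : MvPolynomial J ℝ) :
    eval y (cF P) = eval (fun j => y (j,0) + y (j,1)) P := by
  induction P using MvPolynomial.induction_on with
  | C a => simp [cF]
  | add P Q hP hQ => simp [hP, hQ]
  | mul_X P i h => simp only [map_mul, h]; simp [cF]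

theorem ev_cG (y : J × Fin 3 → ℝ) (P : MvPolynomial J ℝ) :
    eval y (cG P) = eval (fun j => y (j,0) + y (j,2)) P := by
  induction P using MvPolynomial.induction_on with
  | C a => simp [cG]
  | add P Q hP hQ => simp [hP, hQ]
  | mul_X P i h => simp only [map_mul, h]; simp [cG]

theorem trace_exp {K : Type*} [CommRing K] (A P B Q : Matrix ι ι K) :
    trace (A * P * B * Q) = ∑ d, ∑ c, ∑ b, ∑ a, A d a * B b c * (P a b * Q c d) := by
  simp only [trace, diag]
  refine Finset.sum_congr rfl fun d _ => ?_
  rw [mul_apply]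
  refine Finset.sum_congr rfl fun c _ => ?_
  rw [mul_apply, Finset.sum_mul]
  refine Finset.sum_congr rfl fun b _ => ?_
  rw [mul_apply, Finset.sum_mul, Finset.sum_mul]
  refine Finset.sum_congr rfl fun a _ => ?_
  ring

/-- `T` dominates the `m`-th absolute moment of the eigenvalues. -/
def Dom (L : J → Matrix ι ι ℝ) (m : ℕ) (T : MvPolynomial J ℝ) : Prop :=
  ∀ (x : J → ℝ) (U : Matrix ι ι ℝ) (l : ι → ℝ), Uᵀ * U = 1 → U * Uᵀ = 1 →
    Zr L x = U * diagonal l * Uᵀ → ∑ α, |l α| ^ m ≤ eval x T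

theorem ev_trace (x : J → ℝ) (M : Matrix ι ι (MvPolynomial J ℝ)) :
    eval x (trace M) = trace ((eval x).mapMatrix M) := by
  simp [trace]

theorem Dom_even (L : J → Matrix ι ι ℝ) (m : ℕ) (hm : Even m) : Dom L m (trace (Zp L ^ m)) := by
  intro x U l h1 h2 h3
  rw [ev_trace, map_pow, ev_Zp, h3, spec_trace h1 h2]
  refine Finset.sum_le_sum fun i _ => ?_
  rw [hm.pow_abs]

theorem Dom_any (L : J → Matrix ι ι ℝ) (m : ℕ) : Dom L m (trace (1 + Zp L ^ (2 * m))) := by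
  intro x U l h1 h2 h3
  rw [ev_trace, map_add, map_one, map_pow, ev_Zp, h3, trace_add, spec_trace h1 h2, trace_one,
    Fintype.card_eq_sum_ones, Nat.cast_sum, ← Finset.sum_add_distrib]
  refine Finset.sum_le_sum fun i _ => ?_
  have : l i ^ (2 * m) = (|l i| ^ m) ^ 2 := by rw [← pow_mul, mul_comm m 2, pow_mul, pow_mul, sq_abs]
  rw [this]
  push_cast
  nlinarith [sq_nonneg (|l i| ^ m - 1), sq_nonneg (|l i| ^ m)]

theorem cvar_nonneg {b : J → ℝ} (hb : ∀ j, 0 ≤ b j) {τ : ℝ} (h : τ ∈ Set.Icc (0:ℝ) 1) (x) :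
    0 ≤ cvar b τ x := by
  rw [cvar]
  refine mul_nonneg (hb _) ?_
  split_ifs
  · exact h.1
  · linarith [h.2]

theorem cov_bound {b c : J → ℝ} {L : J → Matrix ι ι ℝ} {v2 s2 : ℝ} (hL : ∀ j, (L j).IsSymm)
    (h : Fam c L v2 s2) (h' : Fam b L v2 s2) {R : Matrix ι ι ℝ} (hR : Contr R) (k l m : ℕ)
    (hm : 0 < k → 0 < l → k + l = m + 2) (T : MvPolynomial J ℝ) (hT : Dom L m T) :
    |∑ j, c j * (gE b (trace (cm R * cm (L j) * Zp L ^ k * cm (L j) * Zp L ^ l)) -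
      trace (R * L j * Em b (Zp L ^ k) * L j * Em b (Zp L ^ l)))| ≤
    k * l * (v2 * s2 * (4 * gE b T)) := by
  set K : J → ι → ι → ι → ι → ℝ := fun j d c a b => (R * L j) d a * (L j) b c with hK
  set φ : ℝ → ℝ := fun τ => ∑ j, c j * ∑ d, ∑ e, ∑ f, ∑ a, ((R * L j) d a * (L j) f e) *
    gE (cvar b τ) (cF ((Zp L ^ k) a f) * cG ((Zp L ^ l) e d)) with hφ
  set Φ : MvPolynomial (J × Fin 3) ℝ := ∑ j, ∑ d, ∑ e, ∑ f, ∑ a, ∑ j',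
    (c j * (((R * L j) d a * (L j) f e) * b j')) •
      (cF (pderiv j' ((Zp L ^ k) a f)) * cG (pderiv j' ((Zp L ^ l) e d))) with hΦ
  have der : ∀ τ, HasDerivAt φ (gE (cvar b τ) Φ) τ := by
    intro τ
    have : gE (cvar b τ) Φ = ∑ j, c j * ∑ d, ∑ e, ∑ f, ∑ a, ((R * L j) d a * (L j) f e) *
      ∑ j', b j' * gE (cvar b τ) (cF (pderiv j' ((Zp L ^ k) a f)) * cG (pderiv j' ((Zp L ^ l) e d))) := by
      rw [hΦ]
      simp only [map_sum, map_smul, smul_eq_mul, Finset.mul_sum]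
      refine Finset.sum_congr rfl fun _ _ => Finset.sum_congr rfl fun _ _ => Finset.sum_congr rfl
        fun _ _ => Finset.sum_congr rfl fun _ _ => Finset.sum_congr rfl fun _ _ =>
        Finset.sum_congr rfl fun _ _ => by ring
    rw [this]
    refine HasDerivAt.fun_sum fun j _ => HasDerivAt.const_mul _ ?_
    refine HasDerivAt.fun_sum fun d _ => HasDerivAt.fun_sum fun e _ => HasDerivAt.fun_sum fun f _ =>
      HasDerivAt.fun_sum fun a _ => HasDerivAt.const_mul _ ?_
    exact gE_cov_deriv b _ _ τ
  have φ1 : φ 1 = ∑ j, c j * gE b (trace (cm R * cm (L j) * Zp L ^ k * cm (L j) * Zp L ^ l)) := by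
    rw [hφ]
    simp only [gE_c1]
    refine Finset.sum_congr rfl fun j _ => ?_
    congr 1
    rw [← cm_mul, trace_exp]
    simp only [map_sum]
    refine Finset.sum_congr rfl fun d _ => Finset.sum_congr rfl fun e _ => Finset.sum_congr rfl
        fun f _ => Finset.sum_congr rfl fun a _ => ?_
    simp only [cm, Matrix.map_apply]
    rw [← C_mul, ← smul_eq_C_mul, map_smul, smul_eq_mul]
  have φ0 : φ 0 = ∑ j, c j * trace (R * L j * Em b (Zp L ^ k) * L j * Em b (Zp L ^ l)) := by
    rw [hφ]
    simp only [gE_c0]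
    refine Finset.sum_congr rfl fun j _ => ?_
    congr 1
    rw [trace_exp]
    rfl
  have e : ∑ j, c j * (gE b (trace (cm R * cm (L j) * Zp L ^ k * cm (L j) * Zp L ^ l)) -
      trace (R * L j * Em b (Zp L ^ k) * L j * Em b (Zp L ^ l))) = φ 1 - φ 0 := by
    rw [φ1, φ0, ← Finset.sum_sub_distrib]
    refine Finset.sum_congr rfl fun j _ => by ring
  rw [e]
  have bd : ∀ τ ∈ Set.Icc (0:ℝ) 1, |gE (cvar b τ) Φ| ≤ k * l * (v2 * s2 * (4 * gE b T)) := by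
    intro τ hτ
    have := gE_abs_le (cvar b τ) (cvar_nonneg h'.hb hτ) Φ ((k * l * (v2 * s2 * 2)) • (cF T + cG T)) ?_
    · refine this.trans (le_of_eq ?_)
      rw [map_smul, map_add, gE_cF, gE_cG, smul_eq_mul]; ring
    · intro y
      set x1 : J → ℝ := fun j => y (j,0) + y (j,1) with hx1
      set x2 : J → ℝ := fun j => y (j,0) + y (j,2) with hx2
      obtain ⟨U, l1, hU', hU, hZ1⟩ := spec _ (Zr_symm hL x1)
      obtain ⟨V, l2, hV', hV, hZ2⟩ := spec _ (Zr_symm hL x2)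
      have D1 := hT x1 U l1 hU hU' hZ1
      have D2 := hT x2 V l2 hV hV' hZ2
      have ev : eval y Φ = ∑ i ∈ Finset.range k, ∑ i' ∈ Finset.range l, ∑ j, ∑ j', c j * b j' *
          trace (R * L j * Zr L x1 ^ i * L j' * Zr L x1 ^ (k-1-i) * L j * Zr L x2 ^ i' * L j' *
            Zr L x2 ^ (l-1-i')) := by
        have e1 : eval y Φ = ∑ j, ∑ j', c j * b j' * trace (R * L j *
          (∑ i ∈ Finset.range k, Zr L x1 ^ i * L j' * Zr L x1 ^ (k-1-i)) * L j *
          (∑ i ∈ Finset.range l, Zr L x2 ^ i * L j' * Zr L x2 ^ (l-1-i))) := by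
          simp only [hΦ, map_sum, smul_eq_C_mul, map_mul (eval y), ev_cF, ev_cG, eval_C]
          have g1 : ∀ (F : J → J → ι → ι → ι → ι → ℝ), ∑ j, ∑ d, ∑ e, ∑ f, ∑ a, ∑ j', F j j' d e f a
              = ∑ j, ∑ j', ∑ d, ∑ e, ∑ f, ∑ a, F j j' d e f a := by
            intro F
            refine Finset.sum_congr rfl fun j _ => ?_
            simp only [← Fintype.sum_prod_type']
            exact Fintype.sum_equiv ⟨fun x => (x.2.2.2.2, x.1, x.2.1, x.2.2.1, x.2.2.2.1),
              fun y => (y.2.1, y.2.2.1, y.2.2.2.1, y.2.2.2.2, y.1), fun _ => rfl, fun _ => rfl⟩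
              _ _ (fun _ => rfl)
          rw [g1]
          refine Finset.sum_congr rfl fun j _ => Finset.sum_congr rfl fun j' _ => ?_
          rw [trace_exp, Finset.mul_sum]
          refine Finset.sum_congr rfl fun d _ => ?_
          rw [Finset.mul_sum]
          refine Finset.sum_congr rfl fun e _ => ?_
          rw [Finset.mul_sum]
          refine Finset.sum_congr rfl fun f _ => ?_
          rw [Finset.mul_sum]
          refine Finset.sum_congr rfl fun a _ => ?_
          rw [ev_pderiv_pow, ev_pderiv_pow]
          ring
        rw [e1]
        have e2 : ∀ j j', c j * b j' * trace (R * L j *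
          (∑ i ∈ Finset.range k, Zr L x1 ^ i * L j' * Zr L x1 ^ (k-1-i)) * L j *
          (∑ i ∈ Finset.range l, Zr L x2 ^ i * L j' * Zr L x2 ^ (l-1-i))) =
          ∑ i ∈ Finset.range k, ∑ i' ∈ Finset.range l, c j * b j' *
          trace (R * L j * Zr L x1 ^ i * L j' * Zr L x1 ^ (k-1-i) * L j * Zr L x2 ^ i' * L j' *
            Zr L x2 ^ (l-1-i')) := by
          intro j j'
          rw [Matrix.mul_sum, Matrix.trace_sum, Finset.mul_sum, Finset.sum_comm]
          refine Finset.sum_congr rfl fun i' _ => ?_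
          rw [Matrix.mul_sum, Matrix.sum_mul, Matrix.sum_mul, Matrix.trace_sum, Finset.mul_sum]
          refine Finset.sum_congr rfl fun i _ => ?_
          simp only [← Matrix.mul_assoc]
        simp only [e2]
        have : ∀ j, ∑ j', ∑ i ∈ Finset.range k, ∑ i' ∈ Finset.range l, c j * b j' *
          trace (R * L j * Zr L x1 ^ i * L j' * Zr L x1 ^ (k-1-i) * L j * Zr L x2 ^ i' * L j' *
            Zr L x2 ^ (l-1-i')) = ∑ i ∈ Finset.range k, ∑ i' ∈ Finset.range l, ∑ j', c j * b j' *
          trace (R * L j * Zr L x1 ^ i * L j' * Zr L x1 ^ (k-1-i) * L j * Zr L x2 ^ i' * L j' *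
            Zr L x2 ^ (l-1-i')) := by
          intro j
          rw [Finset.sum_comm]
          refine Finset.sum_congr rfl fun i _ => ?_
          rw [Finset.sum_comm]
        simp only [this]
        rw [Finset.sum_comm]
        refine Finset.sum_congr rfl fun i _ => ?_
        rw [Finset.sum_comm]
      rw [ev]
      have each : ∀ i ∈ Finset.range k, ∀ i' ∈ Finset.range l, |∑ j, ∑ j', c j * b j' *
          trace (R * L j * Zr L x1 ^ i * L j' * Zr L x1 ^ (k-1-i) * L j * Zr L x2 ^ i' * L j' *
            Zr L x2 ^ (l-1-i'))| ≤ v2 * s2 * 2 * (eval x1 T + eval x2 T) := by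
        intro i hi i' hi'
        rw [Finset.mem_range] at hi hi'
        have em : i + (k-1-i) + i' + (l-1-i') = m := by
          have := hm (by omega) (by omega)
          omega
        have := crossing h h' hR hU hU' hV hV' hZ1 hZ2 i (k-1-i) i' (l-1-i')
        rw [em] at this
        refine this.trans ?_
        rw [mul_assoc (v2 * s2)]
        refine mul_le_mul_of_nonneg_left ?_ (mul_nonneg h.hv0 h.hs0)
        linarith
      calc _ ≤ ∑ i ∈ Finset.range k, ∑ i' ∈ Finset.range l, v2 * s2 * 2 * (eval x1 T + eval x2 T) :=
            (Finset.abs_sum_le_sum_abs _ _).trans (Finset.sum_le_sum fun i hi =>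
              (Finset.abs_sum_le_sum_abs _ _).trans (Finset.sum_le_sum fun i' hi' => each i hi i' hi'))
        _ = _ := by
          simp only [Finset.sum_const, Finset.card_range, nsmul_eq_mul, smul_eq_C_mul, map_mul,
            eval_C, map_add, ev_cF, ev_cG, map_natCast]
          ring
  have := norm_image_sub_le_of_norm_deriv_le_segment_01' (f := φ) (f' := fun τ => gE (cvar b τ) Φ)
    (C := k * l * (v2 * s2 * (4 * gE b T))) (fun x _ => (der x).hasDerivWithinAt)
    (fun x hx => bd x ⟨hx.1, hx.2.le⟩)
  exact this

end PolyMat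


section Interp
open Matrix MvPolynomial

variable {ι J : Type*} [Fintype ι] [DecidableEq ι] [Fintype J]

theorem pderiv_trace (j : J) (M : Matrix ι ι (MvPolynomial J ℝ)) :
    pderiv j (trace M) = trace (pm j M) := by
  simp [trace, pm]

theorem pderiv_trace_pow (L : J → Matrix ι ι ℝ) (j : J) (n : ℕ) :
    pderiv j (trace (Zp L ^ (n+1))) = (n+1 : ℝ) • trace (cm (L j) * Zp L ^ n) := by
  rw [pderiv_trace, pm_pow, trace_sum]
  have : ∀ i ∈ Finset.range (n+1), trace (Zp L ^ i * cm (L j) * Zp L ^ (n + 1 - 1 - i))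
      = trace (cm (L j) * Zp L ^ n) := by
    intro i hi
    have := Finset.mem_range.1 hi
    rw [Matrix.mul_assoc, Matrix.trace_mul_comm, Matrix.mul_assoc, ← pow_add,
      show n + 1 - 1 - i + i = n by omega]
  rw [Finset.sum_congr rfl this, Finset.sum_const, Finset.card_range, smul_eq_C_mul, nsmul_eq_mul]
  simp

theorem pderiv2_trace_pow (L : J → Matrix ι ι ℝ) (j : J) (n : ℕ) :
    pderiv j (pderiv j (trace (Zp L ^ (n+2)))) = (n+2 : ℝ) •
      ∑ i ∈ Finset.range (n+1), trace (cm (L j) * Zp L ^ i * cm (L j) * Zp L ^ (n - i)) := by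
  rw [pderiv_trace_pow L j (n+1), Derivation.map_smul, pderiv_trace, pm_mul, pm_cm, zero_mul, zero_add, pm_pow,
    Matrix.mul_sum, trace_sum]
  have : ((n+1:ℕ):ℝ) + 1 = (n:ℝ) + 2 := by push_cast; ring
  rw [this]
  simp only [← Matrix.mul_assoc, Nat.add_sub_cancel]

theorem cm_one : (cm (1 : Matrix ι ι ℝ) : Matrix ι ι (MvPolynomial J ℝ)) = 1 :=
  Matrix.map_one _ (map_zero _) (map_one _)

theorem Contr_one : Contr (1 : Matrix ι ι ℝ) := by
  constructor <;> intro x <;> simp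

/-- interpolated variances -/
def bt (b0 b1 : J → ℝ) (s : ℝ) : J → ℝ := fun j => s * b1 j + (1 - s) * b0 j

theorem Fam.bt {b0 b1 : J → ℝ} {L : J → Matrix ι ι ℝ} {v2 s2 : ℝ} (h0 : Fam b0 L v2 s2)
    (h1 : Fam b1 L v2 s2) {s : ℝ} (hs : s ∈ Set.Icc (0:ℝ) 1) : Fam (bt b0 b1 s) L v2 s2 := by
  have hs0 := hs.1
  have hs1 : 0 ≤ 1 - s := by linarith [hs.2]
  have gen : ∀ (f : J → ℝ) (K : ℝ), ∑ j, b0 j * f j ≤ K → ∑ j, b1 j * f j ≤ K →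
      ∑ j, _root_.bt b0 b1 s j * f j ≤ K := by
    intro f K e0 e1
    have : ∑ j, _root_.bt b0 b1 s j * f j = s * ∑ j, b1 j * f j + (1-s) * ∑ j, b0 j * f j := by
      simp only [_root_.bt, Finset.mul_sum, ← Finset.sum_add_distrib]
      refine Finset.sum_congr rfl fun j _ => by ring
    rw [this]
    have a1 := mul_le_mul_of_nonneg_left e1 hs0
    have a2 := mul_le_mul_of_nonneg_left e0 hs1
    linarith
  exact { hb := fun j => add_nonneg (mul_nonneg hs0 (h1.hb j)) (mul_nonneg hs1 (h0.hb j))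
          hv0 := h0.hv0
          hs0 := h0.hs0
          hv := fun M => gen _ _ (h0.hv M) (h1.hv M)
          hr := fun M => gen _ _ (h0.hr M) (h1.hr M)
          hc := fun M => gen _ _ (h0.hc M) (h1.hc M) }

theorem sum_kl (q : ℕ) : ∑ i ∈ Finset.range (2*q+3), (i:ℝ) * ((2*q+2-i : ℕ):ℝ) ≤ 2 * (q+2:ℝ)^3 := by
  have : ∀ i ∈ Finset.range (2*q+3), (i:ℝ) * ((2*q+2-i : ℕ):ℝ) ≤ (q+1:ℝ)^2 := by
    intro i hi
    have := Finset.mem_range.1 hi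
    rw [Nat.cast_sub (by omega)]
    push_cast
    nlinarith [sq_nonneg ((i:ℝ) - (q+1))]
  refine (Finset.sum_le_sum this).trans ?_
  rw [Finset.sum_const, Finset.card_range, nsmul_eq_mul]
  push_cast
  have : (0:ℝ) ≤ q := Nat.cast_nonneg q
  nlinarith [mul_nonneg this this, mul_nonneg this (mul_nonneg this this)]

theorem pow_interp (q : ℕ) (x r : ℝ) (hr : 0 < r) :
    r ^ 2 * x ^ (2*q) ≤ x ^ (2*(q+2)) + r ^ (q+2) := by
  rw [pow_mul, pow_mul]
  have hx : 0 ≤ x ^ 2 := sq_nonneg x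
  generalize x ^ 2 = y at *
  rcases le_total y r with h | h
  · have : y ^ q ≤ r ^ q := pow_le_pow_left₀ hx h q
    have h2 : 0 ≤ y ^ (q+2) := by positivity
    have h3 : r ^ (q+2) = r ^ q * r ^ 2 := by ring
    nlinarith [sq_nonneg r]
  · have : r ^ 2 ≤ y ^ 2 := pow_le_pow_left₀ hr.le h 2
    have h2 : 0 ≤ r ^ (q+2) := by positivity
    have h3 : y ^ (q+2) = y ^ q * y ^ 2 := by ring
    have h4 : 0 ≤ y ^ q := by positivity
    nlinarith

theorem trace_interp {L : J → Matrix ι ι ℝ} (hL : ∀ j, (L j).IsSymm) {b : J → ℝ} (hb : ∀ j, 0 ≤ b j)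
    (q : ℕ) (r : ℝ) (hr : 0 < r) :
    r ^ 2 * gE b (trace (Zp L ^ (2*q))) ≤ gE b (trace (Zp L ^ (2*(q+2)))) + r ^ (q+2) * Fintype.card ι := by
  have := gE_mono b hb (r ^ 2 • trace (Zp L ^ (2*q))) (trace (Zp L ^ (2*(q+2))) +
    (r ^ (q+2) * Fintype.card ι) • 1) ?_
  · simpa only [map_smul, map_add, gE_one, smul_eq_mul, mul_one] using this
  · intro x
    obtain ⟨U, l, h2, h1, h3⟩ := spec _ (Zr_symm hL x)
    simp only [smul_eq_C_mul, map_mul (eval x), map_add, eval_C, map_one, mul_one]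
    rw [ev_trace, ev_trace, map_pow, map_pow, ev_Zp, h3, spec_trace h1 h2, spec_trace h1 h2,
      Fintype.card_eq_sum_ones, Nat.cast_sum, Finset.mul_sum, Finset.mul_sum, ← Finset.sum_add_distrib]
    refine Finset.sum_le_sum fun i _ => ?_
    simpa using pow_interp q (l i) r hr

theorem trace_even_nonneg {L : J → Matrix ι ι ℝ} (hL : ∀ j, (L j).IsSymm) {b : J → ℝ}
    (hb : ∀ j, 0 ≤ b j) (q : ℕ) : 0 ≤ gE b (trace (Zp L ^ (2*q))) := by
  have := gE_mono b hb 0 (trace (Zp L ^ (2*q))) ?_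
  · simpa using this
  · intro x
    obtain ⟨U, l, h2, h1, h3⟩ := spec _ (Zr_symm hL x)
    rw [ev_trace, map_pow, ev_Zp, h3, spec_trace h1 h2, map_zero]
    refine Finset.sum_nonneg fun i _ => ?_
    rw [pow_mul]; positivity

theorem gronwall_simple (y y' : ℝ → ℝ) (K : ℝ) (hy : ∀ s, HasDerivAt y (y' s) s)
    (h : ∀ s ∈ Set.Icc (0:ℝ) 1, y' s ≤ K * y s) : y 1 ≤ Real.exp K * y 0 := by
  have hd : ∀ s, HasDerivAt (fun s => y s * Real.exp (-(K * s)))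
      (y' s * Real.exp (-(K * s)) + y s * (Real.exp (-(K * s)) * (-(K * 1)))) s := by
    intro s
    exact (hy s).mul (((hasDerivAt_id s).const_mul K).neg.exp)
  have anti : AntitoneOn (fun s => y s * Real.exp (-(K * s))) (Set.Icc 0 1) := by
    apply antitoneOn_of_deriv_nonpos (convex_Icc 0 1)
    · exact fun s _ => (hd s).continuousAt.continuousWithinAt
    · exact fun s _ => (hd s).differentiableAt.differentiableWithinAt
    · intro s hs
      rw [(hd s).deriv]
      have h1 := h s (interior_subset hs)
      have h2 := Real.exp_pos (-(K * s))
      nlinarith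
  have := anti (Set.left_mem_Icc.2 zero_le_one) (Set.right_mem_Icc.2 zero_le_one) zero_le_one
  simp only [mul_one, mul_zero, neg_zero, Real.exp_zero] at this
  have h2 : y 1 = Real.exp K * (y 1 * Real.exp (-K)) := by
    rw [mul_comm, mul_assoc, ← Real.exp_add]; simp
  rw [h2]
  exact mul_le_mul_of_nonneg_left this (Real.exp_pos K).le

theorem interp_main {b0 b1 : J → ℝ} {L : J → Matrix ι ι ℝ} {v2 s2 : ℝ} (hL : ∀ j, (L j).IsSymm)
    (h0 : Fam b0 L v2 s2) (h1 : Fam b1 L v2 s2)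
    (hmain : ∀ s k l, ∑ j, b1 j * trace (L j * Em (bt b0 b1 s) (Zp L ^ k) * L j *
        Em (bt b0 b1 s) (Zp L ^ l)) = ∑ j, b0 j * trace (L j * Em (bt b0 b1 s) (Zp L ^ k) * L j *
        Em (bt b0 b1 s) (Zp L ^ l)))
    (q : ℕ) (r : ℝ) (hr : 0 < r) (hrv : (q+2:ℝ)^3 * (v2 * s2) ≤ r ^ 2) :
    gE b1 (trace (Zp L ^ (2*(q+2)))) ≤ Real.exp (16 * (q+2)) *
      (gE b0 (trace (Zp L ^ (2*(q+2)))) + r ^ (q+2) * Fintype.card ι) := by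
  set D : ℝ := r ^ (q+2) * Fintype.card ι with hD
  have hDn : 0 ≤ D := by positivity
  have der : ∀ s, HasDerivAt (fun s => gE (bt b0 b1 s) (trace (Zp L ^ (2*(q+2)))) + D)
      (1 / 2 * ∑ j, (b1 j - b0 j) * gE (bt b0 b1 s) (pderiv j (pderiv j (trace (Zp L ^ (2*(q+2))))))) s := by
    intro s
    refine (gE_hasDerivAt (bt b0 b1) (fun j => b1 j - b0 j) s ?_ _).add_const D
    intro j
    have e1 := ((hasDerivAt_id s).mul_const (b1 j)).add
      (((hasDerivAt_id s).const_sub 1).mul_const (b0 j))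
    refine e1.congr_deriv ?_
    ring
  have key := gronwall_simple _ _ (16 * (q+2)) der ?_
  · have e1 : bt b0 b1 1 = b1 := by ext j; simp [bt]
    have e0 : bt b0 b1 0 = b0 := by ext j; simp [bt]
    rw [e1, e0] at key
    linarith
  · intro s hs
    have hF := h0.bt h1 hs
    set t := gE (bt b0 b1 s) with ht
    set m4 := t (trace (Zp L ^ (2*q))) with hm4
    have hm4n : 0 ≤ m4 := trace_even_nonneg hL hF.hb q
    have e1 : 1 / 2 * ∑ j, (b1 j - b0 j) * t (pderiv j (pderiv j (trace (Zp L ^ (2*(q+2)))))) =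
        (q + 2) * ∑ i ∈ Finset.range (2*q+3), ∑ j, (b1 j - b0 j) *
          t (trace (cm (L j) * Zp L ^ i * cm (L j) * Zp L ^ (2*q+2-i))) := by
      have : 2*(q+2) = (2*q+2)+2 := by ring
      rw [this]
      simp only [pderiv2_trace_pow, map_smul, map_sum, smul_eq_mul]
      rw [Finset.sum_comm, Finset.mul_sum, Finset.mul_sum]
      refine Finset.sum_congr rfl fun j _ => ?_
      simp only [Finset.mul_sum]
      refine Finset.sum_congr rfl fun i _ => ?_
      push_cast; ring
    rw [e1]
    have each : ∀ i ∈ Finset.range (2*q+3), ∑ j, (b1 j - b0 j) *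
          t (trace (cm (L j) * Zp L ^ i * cm (L j) * Zp L ^ (2*q+2-i))) ≤
          (i:ℝ) * ((2*q+2-i : ℕ):ℝ) * (8 * (v2 * s2 * m4)) := by
      intro i hi
      have hi' := Finset.mem_range.1 hi
      have c1 := cov_bound hL h1 hF Contr_one i (2*q+2-i) (2*q) (by intro _ _; omega) _
        (Dom_even L (2*q) (even_two_mul q))
      have c0 := cov_bound hL h0 hF Contr_one i (2*q+2-i) (2*q) (by intro _ _; omega) _
        (Dom_even L (2*q) (even_two_mul q))
      simp only [cm_one, Matrix.one_mul, mul_sub, Finset.sum_sub_distrib, one_mul] at c1 c0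
      have hm := hmain s i (2*q+2-i)
      rw [hm] at c1
      simp only [sub_mul, Finset.sum_sub_distrib]
      have c1' := (abs_le.1 c1).2
      have c0' := (abs_le.1 c0).1
      rw [← ht] at c1' c0'
      rw [← hm4] at c1' c0'
      linarith
    have tot := Finset.sum_le_sum each
    rw [← Finset.sum_mul] at tot
    have hvs : 0 ≤ v2 * s2 := mul_nonneg h0.hv0 h0.hs0
    have tot2 := tot.trans (mul_le_mul_of_nonneg_right (sum_kl q) (by positivity))
    have hti : r ^ 2 * m4 ≤ _ := trace_interp hL hF.hb q r hr
    calc _ ≤ ((q:ℝ)+2) * (2 * (q+2:ℝ)^3 * (8 * (v2 * s2 * m4))) :=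
          mul_le_mul_of_nonneg_left tot2 (by positivity)
      _ = 16 * ((q:ℝ)+2) * (((q+2:ℝ)^3 * (v2 * s2)) * m4) := by ring
      _ ≤ 16 * ((q:ℝ)+2) * (r ^ 2 * m4) :=
          mul_le_mul_of_nonneg_left (mul_le_mul_of_nonneg_right hrv hm4n) (by positivity)
      _ ≤ _ := mul_le_mul_of_nonneg_left hti (by positivity)

end Interp


section Tensor
open Matrix MvPolynomial
open scoped Kronecker

variable {ι κ I : Type*} [Fintype ι] [DecidableEq ι] [Fintype κ] [DecidableEq κ] [Fintype I] [DecidableEq I]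

/-- symmetrised matrix unit -/
def Gm (r s : κ) : Matrix κ κ ℝ := single r s 1 + single s r 1

/-- the tensor family -/
def TL (A : I → Matrix ι ι ℝ) : I × κ × κ → Matrix (ι × κ) (ι × κ) ℝ :=
  fun j => A j.1 ⊗ₖ Gm j.2.1 j.2.2

/-- block diagonal variances -/
noncomputable def tb1 : I × κ × κ → ℝ := fun j => if j.2.1 = j.2.2 then 1/4 else 0

/-- GOE variances -/
noncomputable def tb0 : I × κ × κ → ℝ := fun _ => 1 / (2 * (Fintype.card κ + 1))

theorem Gm_symm (r s : κ) : (Gm r s).IsSymm := by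
  simp only [Matrix.IsSymm, Gm, transpose_add, transpose_single]
  exact add_comm _ _

theorem TL_symm {A : I → Matrix ι ι ℝ} (hA : ∀ i, (A i).IsSymm) (j : I × κ × κ) : (TL A j).IsSymm := by
  simp only [Matrix.IsSymm, TL]
  rw [← kroneckerMap_transpose, hA, Gm_symm]

theorem Gm_sq (r s : κ) : Gm r s * Gm r s = single r r 1 + single s s 1 +
    (if r = s then (2:ℝ) • single r r 1 else 0) := by
  rw [Gm, add_mul, mul_add, mul_add, single_mul_single_same, single_mul_single_same]
  by_cases h : r = s
  · subst h
    simp only [single_mul_single_same, if_true, mul_one, two_smul]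
    try abel
  · rw [single_mul_single_of_ne _ _ _ _ (Ne.symm h), single_mul_single_of_ne _ _ _ _ h, if_neg h]
    simp

theorem sum_single_diag : ∑ r : κ, (single r r 1 : Matrix κ κ ℝ) = 1 := by
  ext u w
  rw [Matrix.sum_apply, Matrix.one_apply]
  simp only [single_apply]
  by_cases h : u = w
  · subst h; simp
  · rw [if_neg h]
    refine Finset.sum_eq_zero fun r _ => ?_
    rw [if_neg]; rintro ⟨rfl, h2⟩; exact h h2

theorem sumG1 : ∑ r : κ, ∑ s : κ, (if r = s then (1/4:ℝ) else 0) • (Gm r s * Gm r s) = 1 := by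
  rw [← sum_single_diag]
  refine Finset.sum_congr rfl fun r _ => ?_
  rw [Finset.sum_eq_single r]
  · rw [Gm_sq, if_pos rfl, if_pos rfl, ← two_smul ℝ, ← add_smul, smul_smul]; norm_num
  · intro s _ h; rw [if_neg (Ne.symm h), zero_smul]
  · simp

theorem sumG0 : ∑ r : κ, ∑ s : κ, (1 / (2 * ((Fintype.card κ:ℝ) + 1))) • (Gm r s * Gm r s) = 1 := by
  simp only [← Finset.smul_sum, Gm_sq, Finset.sum_add_distrib, sum_single_diag, Finset.sum_const,
    Finset.sum_ite_eq, Finset.mem_univ, if_true, Finset.card_univ]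
  simp only [← Nat.cast_smul_eq_nsmul ℝ, ← add_smul, smul_smul]
  have : (1 / (2 * ((Fintype.card κ:ℝ) + 1)) * (Fintype.card κ + Fintype.card κ + 2)) = 1 := by
    field_simp; ring
  rw [this, one_smul]

theorem sum_TL (A : I → Matrix ι ι ℝ) (β : κ → κ → ℝ)
    (hβ : ∑ r, ∑ s, β r s • (Gm r s * Gm r s) = 1) (M : Matrix ι ι ℝ) :
    ∑ j : I × κ × κ, β j.2.1 j.2.2 • (TL A j * (M ⊗ₖ (1 : Matrix κ κ ℝ)) * TL A j)
      = (∑ i, A i * M * A i) ⊗ₖ (1 : Matrix κ κ ℝ) := by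
  have e : ∀ j : I × κ × κ, β j.2.1 j.2.2 • (TL A j * (M ⊗ₖ (1 : Matrix κ κ ℝ)) * TL A j)
     = (A j.1 * M * A j.1) ⊗ₖ (β j.2.1 j.2.2 • (Gm j.2.1 j.2.2 * Gm j.2.1 j.2.2)) := by
    intro j
    rw [TL, ← mul_kronecker_mul, ← mul_kronecker_mul, Matrix.mul_one, kronecker_smul]
  simp only [e, Fintype.sum_prod_type]
  rw [← hβ]
  ext p q
  simp only [Matrix.sum_apply, kroneckerMap_apply, Finset.sum_mul, Finset.mul_sum]
  rw [Finset.sum_comm]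
  refine Finset.sum_congr rfl fun r _ => ?_
  rw [Finset.sum_comm]

theorem nsq_dot (x : ι → ℝ) : nsq x = x ⬝ᵥ x := by simp [nsq, dotProduct, sq]

theorem nsq_mulVec (M : Matrix ι ι ℝ) (x : ι → ℝ) : nsq (M *ᵥ x) = x ⬝ᵥ ((Mᵀ * M) *ᵥ x) := by
  rw [nsq_dot, dotProduct_mulVec, vecMul_mulVec, ← dotProduct_mulVec]

theorem TL_hc {A : I → Matrix ι ι ℝ} (hA : ∀ i, (A i).IsSymm) {v2 s2 : ℝ}
    (hF : Fam (fun _ : I => 1) A v2 s2) (β : κ → κ → ℝ)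
    (hβ : ∑ r, ∑ s, β r s • (Gm r s * Gm r s) = 1) (x : ι × κ → ℝ) :
    ∑ j : I × κ × κ, β j.2.1 j.2.2 * nsq (TL A j *ᵥ x) ≤ s2 * nsq x := by
  have e1 : ∑ j : I × κ × κ, β j.2.1 j.2.2 * nsq (TL A j *ᵥ x) =
      x ⬝ᵥ (((∑ i, A i * A i) ⊗ₖ (1 : Matrix κ κ ℝ)) *ᵥ x) := by
    have := sum_TL A β hβ 1
    simp only [Matrix.mul_one, one_kronecker_one] at this
    rw [← this, Matrix.sum_mulVec, dotProduct_sum]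
    refine Finset.sum_congr rfl fun j _ => ?_
    rw [nsq_mulVec, TL_symm hA j, smul_mulVec, dotProduct_smul, smul_eq_mul]
  rw [e1]
  have e2 : x ⬝ᵥ (((∑ i, A i * A i) ⊗ₖ (1 : Matrix κ κ ℝ)) *ᵥ x) =
      ∑ u, ∑ i, nsq (A i *ᵥ fun y => x (y, u)) := by
    simp only [nsq_mulVec]
    have : ∀ u, ∑ i, (fun y => x (y, u)) ⬝ᵥ ((A i)ᵀ * A i) *ᵥ (fun y => x (y, u)) =
        (fun y => x (y, u)) ⬝ᵥ ((∑ i, A i * A i) *ᵥ (fun y => x (y, u))) := by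
      intro u
      rw [Matrix.sum_mulVec, dotProduct_sum]
      refine Finset.sum_congr rfl fun i _ => ?_
      rw [hA i]
    simp only [this]
    generalize (∑ i, A i * A i) = S
    simp only [dotProduct, mulVec, kroneckerMap_apply, Fintype.sum_prod_type, Matrix.one_apply]
    rw [Finset.sum_comm]
    simp
  rw [e2]
  have : nsq x = ∑ u, nsq (fun y => x (y, u)) := by
    simp only [nsq, Fintype.sum_prod_type]; exact Finset.sum_comm
  rw [this, Finset.mul_sum]
  refine Finset.sum_le_sum fun u _ => ?_
  simpa using hF.hc (fun y => x (y, u))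

theorem fip_TL (A : I → Matrix ι ι ℝ) (M : Matrix (ι × κ) (ι × κ) ℝ) (i : I) (r s : κ) :
    fip (TL A (i, r, s)) M = fip (A i) (Matrix.of fun x y => M (x, r) (y, s)) +
      fip (A i) (Matrix.of fun x y => M (x, s) (y, r)) := by
  have key : ∀ r s : κ, ∑ x, ∑ u, ∑ y, ∑ w, A i x y * (single r s (1:ℝ) : Matrix κ κ ℝ) u w * M (x,u) (y,w) =
      fip (A i) (Matrix.of fun x y => M (x, r) (y, s)) := by
    intro r s
    rw [fip]
    refine Finset.sum_congr rfl fun x _ => ?_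
    rw [Finset.sum_comm]
    refine Finset.sum_congr rfl fun y _ => ?_
    rw [Finset.sum_eq_single r]
    · rw [Finset.sum_eq_single s]
      · simp
      · intro w _ h; simp [single_apply, Ne.symm h]
      · simp
    · intro u _ h
      refine Finset.sum_eq_zero fun w _ => ?_
      simp [single_apply, Ne.symm h]
    · simp
  rw [← key, ← key]
  simp only [fip, TL, Gm, kroneckerMap_apply, Matrix.add_apply, Fintype.sum_prod_type, mul_add, add_mul,
    Finset.sum_add_distrib]

theorem fsq_blocks (M : Matrix (ι × κ) (ι × κ) ℝ) :
    fsq M = ∑ r, ∑ s, fsq (Matrix.of fun x y => M (x, r) (y, s)) := by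
  simp only [fsq, Fintype.sum_prod_type, Matrix.of_apply]
  simp only [← Fintype.sum_prod_type']
  exact Fintype.sum_equiv ⟨fun x => (x.2.1, x.2.2.2, x.1, x.2.2.1),
              fun y => (y.2.2.1, y.1, y.2.2.2, y.2.1), fun _ => rfl, fun _ => rfl⟩
              _ _ (fun _ => rfl)

theorem TL_hv1 {A : I → Matrix ι ι ℝ} {v2 s2 : ℝ}
    (hF : Fam (fun _ : I => 1) A v2 s2) (M : Matrix (ι × κ) (ι × κ) ℝ) :
    ∑ j : I × κ × κ, tb1 j * (fip (TL A j) M) ^ 2 ≤ v2 * fsq M := by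
  have e : ∑ j : I × κ × κ, tb1 j * (fip (TL A j) M) ^ 2 =
      ∑ r, ∑ i, fip (A i) (Matrix.of fun x y => M (x, r) (y, r)) ^ 2 := by
    simp only [Fintype.sum_prod_type]
    rw [Finset.sum_comm]
    refine Finset.sum_congr rfl fun r _ => Finset.sum_congr rfl fun i _ => ?_
    rw [Finset.sum_eq_single r]
    · rw [fip_TL, tb1, if_pos rfl]; ring
    · intro s _ h; rw [tb1, if_neg (Ne.symm h), zero_mul]
    · simp
  rw [e, fsq_blocks, Finset.mul_sum]
  refine Finset.sum_le_sum fun r _ => ?_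
  have h1 := hF.hv (Matrix.of fun x y => M (x, r) (y, r))
  simp only [one_mul] at h1
  refine h1.trans (mul_le_mul_of_nonneg_left ?_ hF.hv0)
  exact Finset.single_le_sum (f := fun s => fsq (Matrix.of fun x y => M (x, r) (y, s)))
    (fun s _ => fsq_nonneg _) (Finset.mem_univ r)

theorem TL_hv0 {A : I → Matrix ι ι ℝ} {v2 s2 : ℝ}
    (hF : Fam (fun _ : I => 1) A v2 s2) (M : Matrix (ι × κ) (ι × κ) ℝ) :
    ∑ j : I × κ × κ, tb0 j * (fip (TL A j) M) ^ 2 ≤ (2 / (Fintype.card κ + 1) * v2) * fsq M := by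
  have e : ∀ i r s, tb0 (i, r, s) * (fip (TL A (i, r, s)) M) ^ 2 ≤
      1 / (Fintype.card κ + 1) * fip (A i) (Matrix.of fun x y => M (x, r) (y, s)) ^ 2 +
      1 / (Fintype.card κ + 1) * fip (A i) (Matrix.of fun x y => M (x, s) (y, r)) ^ 2 := by
    intro i r s
    rw [fip_TL, tb0]
    generalize fip (A i) (Matrix.of fun x y => M (x, r) (y, s)) = a
    generalize fip (A i) (Matrix.of fun x y => M (x, s) (y, r)) = b
    have : 1 / (2 * ((Fintype.card κ:ℝ) + 1)) = 1/2 * (1 / (Fintype.card κ + 1)) := by field_simp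
    rw [this]
    have h : (0:ℝ) ≤ 1 / (Fintype.card κ + 1) := by positivity
    nlinarith [mul_nonneg h (sq_nonneg (a - b))]
  have hb : ∀ r s, ∑ i, fip (A i) (Matrix.of fun x y => M (x, r) (y, s)) ^ 2 ≤
      v2 * fsq (Matrix.of fun x y => M (x, r) (y, s)) := by
    intro r s
    simpa using hF.hv (Matrix.of fun x y => M (x, r) (y, s))
  have hS : ∑ r, ∑ s, ∑ i, fip (A i) (Matrix.of fun x y => M (x, r) (y, s)) ^ 2 ≤ v2 * fsq M := by
    rw [fsq_blocks, Finset.mul_sum]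
    refine Finset.sum_le_sum fun r _ => ?_
    rw [Finset.mul_sum]
    exact Finset.sum_le_sum fun s _ => hb r s
  calc _ ≤ ∑ i, ∑ r, ∑ s, (1 / (Fintype.card κ + 1) * fip (A i) (Matrix.of fun x y => M (x, r) (y, s)) ^ 2 +
      1 / (Fintype.card κ + 1) * fip (A i) (Matrix.of fun x y => M (x, s) (y, r)) ^ 2) := by
        simp only [Fintype.sum_prod_type]
        exact Finset.sum_le_sum fun i _ => Finset.sum_le_sum fun r _ => Finset.sum_le_sum fun s _ => e i r s
    _ = 2 / (Fintype.card κ + 1) * ∑ r, ∑ s, ∑ i, fip (A i) (Matrix.of fun x y => M (x, r) (y, s)) ^ 2 := by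
        have c1 : ∀ (f : I → κ → κ → ℝ), ∑ i, ∑ r, ∑ s, f i r s = ∑ r, ∑ s, ∑ i, f i r s := by
          intro f
          rw [Finset.sum_comm]
          refine Finset.sum_congr rfl fun r _ => ?_
          rw [Finset.sum_comm]
        simp only [Finset.sum_add_distrib, c1]
        rw [Finset.sum_comm (γ := κ) (f := fun r s => ∑ i, 1 / ((Fintype.card κ:ℝ) + 1) *
          fip (A i) (Matrix.of fun x y => M (x, s) (y, r)) ^ 2)]
        simp only [← Finset.mul_sum]
        ring
    _ ≤ 2 / (Fintype.card κ + 1) * (v2 * fsq M) := mul_le_mul_of_nonneg_left hS (by positivity)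
    _ = _ := by ring

theorem Fam_tb1 {A : I → Matrix ι ι ℝ} (hA : ∀ i, (A i).IsSymm) {v2 s2 : ℝ}
    (hF : Fam (fun _ : I => 1) A v2 s2) : Fam (tb1 (κ := κ)) (TL A) v2 s2 where
  hb j := by rw [tb1]; split_ifs <;> norm_num
  hv0 := hF.hv0
  hs0 := hF.hs0
  hv := TL_hv1 hF
  hr x := by
    simp only [(TL_symm hA _).eq]
    exact TL_hc hA hF (fun r s => if r = s then 1/4 else 0) sumG1 x
  hc x := TL_hc hA hF (fun r s => if r = s then 1/4 else 0) sumG1 x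

theorem Fam_tb0 {A : I → Matrix ι ι ℝ} (hA : ∀ i, (A i).IsSymm) {v2 s2 : ℝ}
    (hF : Fam (fun _ : I => 1) A v2 s2) :
    Fam (tb0 (κ := κ)) (TL A) (2 / (Fintype.card κ + 1) * v2) s2 where
  hb j := by rw [tb0]; positivity
  hv0 := mul_nonneg (by positivity) hF.hv0
  hs0 := hF.hs0
  hv := TL_hv0 hF
  hr x := by
    simp only [(TL_symm hA _).eq]
    exact TL_hc hA hF (fun r s => _) sumG0 x
  hc x := TL_hc hA hF (fun r s => _) sumG0 x

theorem Fam.mono {ι J : Type*} [Fintype ι] [DecidableEq ι] [Fintype J]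
    {b : J → ℝ} {L : J → Matrix ι ι ℝ} {v2 v2' s2 : ℝ} (h : Fam b L v2 s2) (hv : v2 ≤ v2') :
    Fam b L v2' s2 :=
  ⟨h.hb, h.hv0.trans hv, h.hs0, fun M => (h.hv M).trans (mul_le_mul_of_nonneg_right hv (fsq_nonneg M)),
    h.hr, h.hc⟩

/-- substitution invariance -/
theorem gE_subst {J : Type*} [Fintype J] [DecidableEq J] (b : J → ℝ) (f : J ≃ J) (ε : J → ℝ)
    (hf : ∀ j, ε j ^ 2 * b (f j) = b j) (P : MvPolynomial J ℝ) :
    gE b (aeval (fun j => ε j • (X (f j) : MvPolynomial J ℝ)) P) = gE b P := by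
  have := gE_lin b b (fun j j' => if j' = f j then ε j else 0) ?_ P
  · rw [← this]
    congr 2
    congr 1
    funext j
    simp
  · intro i i'
    by_cases h : i = i'
    · subst h
      rw [if_pos rfl, Finset.sum_eq_single (f i)]
      · rw [if_pos rfl, ← hf i]; ring
      · intro j _ hj; simp [hj]
      · simp
    · rw [if_neg h]
      refine Finset.sum_eq_zero fun j _ => ?_
      by_cases h1 : j = f i
      · have : j ≠ f i' := by rw [h1]; exact fun h' => h (f.injective h')
        simp [this]
      · simp [h1]

theorem Zp_TL (A : I → Matrix ι ι ℝ) (x y : ι) (u w : κ) :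
    Zp (TL A) (x, u) (y, w) = ∑ i, A i x y • (X (i, u, w) + X (i, w, u) : MvPolynomial (I × κ × κ) ℝ) := by
  simp only [Zp, Matrix.sum_apply, Fintype.sum_prod_type, Matrix.smul_apply, Matrix.map_apply, TL,
    kroneckerMap_apply, smul_eq_mul, Gm, Matrix.add_apply, C_mul, C_add, mul_add, Finset.sum_add_distrib,
    smul_add, smul_eq_C_mul]
  congr 1
  · refine Finset.sum_congr rfl fun i _ => ?_
    rw [Finset.sum_eq_single u, Finset.sum_eq_single w]
    · simp; ring
    · intro s _ h; simp [single_apply, h]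
    · simp
    · intro r _ h
      refine Finset.sum_eq_zero fun s _ => ?_
      simp [single_apply, h]
    · simp
  · refine Finset.sum_congr rfl fun i _ => ?_
    rw [Finset.sum_eq_single w, Finset.sum_eq_single u]
    · simp; ring
    · intro s _ h; simp [single_apply, h]
    · simp
    · intro r _ h
      refine Finset.sum_eq_zero fun s _ => ?_
      simp [single_apply, h]
    · simp

/-- variances only depending on whether the block is diagonal -/
def BInv (b : I × κ × κ → ℝ) : Prop := ∃ β₁ β₂ : ℝ, ∀ j, b j = if j.2.1 = j.2.2 then β₁ else β₂

theorem BInv_bt (s : ℝ) : BInv (bt (tb0 (I := I) (κ := κ)) tb1 s) := by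
  refine ⟨s * (1/4) + (1-s) * (1 / (2 * (Fintype.card κ + 1))), (1-s) * (1 / (2 * (Fintype.card κ + 1))),
    fun j => ?_⟩
  simp only [bt, tb0, tb1]
  split_ifs <;> simp

theorem BInv_tb0 : BInv (tb0 (I := I) (κ := κ)) := ⟨_, _, fun j => (ite_self _).symm⟩

theorem Em_perm (A : I → Matrix ι ι ℝ) (b : I × κ × κ → ℝ) (hb : BInv b) (k : ℕ) (π : κ ≃ κ)
    (x y : ι) (u w : κ) :
    Em b (Zp (TL A) ^ k) (x, π u) (y, π w) = Em b (Zp (TL A) ^ k) (x, u) (y, w) := by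
  obtain ⟨β₁, β₂, hb⟩ := hb
  set f : I × κ × κ ≃ I × κ × κ := Equiv.prodCongr (Equiv.refl I) (Equiv.prodCongr π π) with hf
  have h1 := gE_subst b f (fun _ => 1) (by intro j; simp [hb, hf]) ((Zp (TL A) ^ k) (x,u) (y,w))
  set Ψ := (aeval (R := ℝ) (fun j => (1:ℝ) • (X (f j) : MvPolynomial (I × κ × κ) ℝ))) with hΨ
  have h2 : Ψ.mapMatrix (Zp (TL A)) = (Zp (TL A)).submatrix (Equiv.prodCongr (Equiv.refl ι) π)
      (Equiv.prodCongr (Equiv.refl ι) π) := by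
    ext ⟨x, u⟩ ⟨y, w⟩ : 1
    simp only [AlgHom.mapMatrix_apply, Matrix.map_apply, submatrix_apply, Equiv.prodCongr_apply,
      Prod.map_apply, Equiv.refl_apply, Zp_TL, map_sum, map_smul, map_add, hΨ, aeval_X, one_smul, hf]
  have h3 : Ψ.mapMatrix (Zp (TL A) ^ k) = (Zp (TL A) ^ k).submatrix (Equiv.prodCongr (Equiv.refl ι) π)
      (Equiv.prodCongr (Equiv.refl ι) π) := by
    rw [map_pow, h2]
    clear h1
    induction k with
    | zero => rw [pow_zero, pow_zero, submatrix_one_equiv]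
    | succ k ih => rw [pow_succ, ih, pow_succ, submatrix_mul_equiv]
  have h4 : Ψ ((Zp (TL A) ^ k) (x,u) (y,w)) = (Zp (TL A) ^ k) (x, π u) (y, π w) :=
    congrFun (congrFun h3 (x,u)) (y,w)
  rw [h4] at h1
  exact h1

theorem Em_off (A : I → Matrix ι ι ℝ) (b : I × κ × κ → ℝ) (hb : BInv b) (k : ℕ)
    (x y : ι) (u w : κ) (huw : u ≠ w) : Em b (Zp (TL A) ^ k) (x, u) (y, w) = 0 := by
  set e : κ → ℝ := fun r => if r = u then -1 else 1 with he
  have he2 : ∀ r, e r * e r = 1 := by intro r; simp only [he]; split_ifs <;> norm_num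
  have h1 := gE_subst b (Equiv.refl _) (fun j => e j.2.1 * e j.2.2)
    (by
      intro j
      have : (e j.2.1 * e j.2.2)^2 = (e j.2.1 * e j.2.1) * (e j.2.2 * e j.2.2) := by ring
      rw [this, he2, he2]; simp) ((Zp (TL A) ^ k) (x,u) (y,w))
  set Ψ := (aeval (R := ℝ) (fun j : I × κ × κ => (e j.2.1 * e j.2.2) •
    (X ((Equiv.refl _) j) : MvPolynomial (I × κ × κ) ℝ))) with hΨ
  set E : ι × κ → MvPolynomial (I × κ × κ) ℝ := fun p => C (e p.2) with hE
  have hEE : diagonal E * diagonal E = 1 := by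
    rw [diagonal_mul_diagonal, ← diagonal_one]
    congr 1; funext p; simp only [hE]; rw [← C_mul, he2, C_1]
  have h2 : Ψ.mapMatrix (Zp (TL A)) = diagonal E * Zp (TL A) * diagonal E := by
    ext ⟨x, u⟩ ⟨y, w⟩ : 1
    rw [mul_diagonal, diagonal_mul]
    simp only [AlgHom.mapMatrix_apply, Matrix.map_apply, 
       Equiv.refl_apply, Zp_TL, map_sum, map_smul, map_add, hΨ, aeval_X, hE, Finset.mul_sum, Finset.sum_mul]
    refine Finset.sum_congr rfl fun i _ => ?_
    simp only [smul_eq_C_mul, C_mul]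
    ring
  have h3 : Ψ.mapMatrix (Zp (TL A) ^ k) = diagonal E * Zp (TL A) ^ k * diagonal E := by
    rw [map_pow, h2]
    clear h1
    induction k with
    | zero => rw [pow_zero, pow_zero, Matrix.mul_one, hEE]
    | succ k ih =>
      rw [pow_succ, ih, pow_succ]
      calc _ = diagonal E * Zp (TL A) ^ k * (diagonal E * diagonal E) * Zp (TL A) * diagonal E := by
            simp only [Matrix.mul_assoc]
        _ = _ := by rw [hEE, Matrix.mul_one, Matrix.mul_assoc (diagonal E)]
  have h4 : Ψ ((Zp (TL A) ^ k) (x,u) (y,w)) =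
      (diagonal E * Zp (TL A) ^ k * diagonal E : Matrix _ _ (MvPolynomial (I × κ × κ) ℝ)) (x, u) (y, w) :=
    congrFun (congrFun h3 (x,u)) (y,w)
  rw [h4, mul_diagonal, diagonal_mul] at h1
  have h5 : E (x, u) * (Zp (TL A) ^ k) (x, u) (y, w) * E (y, w) = (-1:ℝ) • (Zp (TL A) ^ k) (x, u) (y, w) := by
    simp only [hE, he, if_true, if_neg (Ne.symm huw), smul_eq_C_mul]
    simp
  rw [h5, map_smul, smul_eq_mul] at h1
  have : Em b (Zp (TL A) ^ k) (x, u) (y, w) = gE b ((Zp (TL A) ^ k) (x, u) (y, w)) := rfl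
  rw [this]; linarith

/-- the block of the expected moment -/
noncomputable def Mk [Inhabited κ] (A : I → Matrix ι ι ℝ) (b : I × κ × κ → ℝ) (k : ℕ) : Matrix ι ι ℝ :=
  Matrix.of fun x y => Em b (Zp (TL A) ^ k) (x, default) (y, default)

theorem Em_eq [Inhabited κ] (A : I → Matrix ι ι ℝ) (b : I × κ × κ → ℝ) (hb : BInv b) (k : ℕ) :
    Em b (Zp (TL A) ^ k) = Mk A b k ⊗ₖ (1 : Matrix κ κ ℝ) := by
  ext ⟨x, u⟩ ⟨y, w⟩
  rw [kroneckerMap_apply, Matrix.one_apply]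
  by_cases h : u = w
  · subst h
    simp only [if_true, mul_one, Mk, Matrix.of_apply]
    have := Em_perm A b hb k (Equiv.swap default u) x y default default
    simpa using this
  · simp only [h, if_false, mul_zero]
    exact Em_off A b hb k x y u w h

theorem hmain_T [Inhabited κ] (A : I → Matrix ι ι ℝ) (s : ℝ) (k l : ℕ) :
    ∑ j : I × κ × κ, tb1 j * trace (TL A j * Em (bt tb0 tb1 s) (Zp (TL A) ^ k) * TL A j *
        Em (bt tb0 tb1 s) (Zp (TL A) ^ l)) = ∑ j : I × κ × κ, tb0 j * trace (TL A j * Em (bt tb0 tb1 s) (Zp (TL A) ^ k) *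
        TL A j * Em (bt tb0 tb1 s) (Zp (TL A) ^ l)) := by
  rw [Em_eq A _ (BInv_bt s) k]
  generalize Em (bt (tb0 (κ := κ)) tb1 s) (Zp (TL A) ^ l) = Q
  have h1 := sum_TL A (fun r s : κ => if r = s then (1/4:ℝ) else 0) sumG1 (Mk A (bt (tb0 (κ := κ)) tb1 s) k)
  have h0 := sum_TL A (fun _ _ : κ => (1 / (2 * ((Fintype.card κ:ℝ) + 1)))) sumG0 (Mk A (bt (tb0 (κ := κ)) tb1 s) k)
  have := congrArg (fun M => trace (M * Q)) (h1.trans h0.symm)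
  simp only [Matrix.sum_mul, trace_sum, Matrix.smul_mul, trace_smul, smul_eq_mul] at this
  exact this

theorem trace_Em {ι J : Type*} [Fintype ι] [DecidableEq ι] [Fintype J] (b : J → ℝ)
    (M : Matrix ι ι (MvPolynomial J ℝ)) : gE b (trace M) = trace (Em b M) := by
  simp [trace, Em]

theorem end0 [Inhabited κ] (A : I → Matrix ι ι ℝ) (b : I × κ × κ → ℝ) (hb : BInv b) (k : ℕ) :
    gE b (trace (Zp (TL A) ^ k)) = Fintype.card κ * trace (Mk A b k) := by
  rw [trace_Em, Em_eq A b hb, trace_kronecker, trace_one, mul_comm]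

theorem end1 (A : I → Matrix ι ι ℝ) (k : ℕ) :
    gE (tb1 (κ := κ)) (trace (Zp (TL A) ^ k)) = Fintype.card κ * gE (fun _ => 1) (trace (Zp A ^ k)) := by
  have h1 := gE_subst (tb1 (κ := κ) (I := I)) (Equiv.refl _) (fun j => if j.2.1 = j.2.2 then 1 else 0)
    (by intro j; simp only [tb1, Equiv.refl_apply]; split_ifs <;> simp_all) (trace (Zp (TL A) ^ k))
  rw [← h1]
  set Ψ := (aeval (R := ℝ) (fun j : I × κ × κ => (if j.2.1 = j.2.2 then (1:ℝ) else 0) •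
    (X ((Equiv.refl _) j) : MvPolynomial (I × κ × κ) ℝ))) with hΨ
  set Θ : κ → (MvPolynomial I ℝ →ₐ[ℝ] MvPolynomial (I × κ × κ) ℝ) := fun u =>
    aeval (R := ℝ) (fun i => ∑ j : I × κ × κ, (if j = (i, u, u) then (2:ℝ) else 0) •
      (X j : MvPolynomial (I × κ × κ) ℝ)) with hΘ
  have hX : ∀ u i, Θ u (X i) = (2:ℝ) • X (i, u, u) := by
    intro u i; simp [hΘ]
  have h2 : Ψ.mapMatrix (Zp (TL A)) = blockDiagonal (fun u => (Θ u).mapMatrix (Zp A)) := by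
    ext ⟨x, u⟩ ⟨y, w⟩ : 1
    rw [blockDiagonal_apply]
    simp only [AlgHom.mapMatrix_apply, Matrix.map_apply, Zp_TL]
    by_cases h : u = w
    · subst h
      simp only [map_sum, map_smul, map_add, hΨ, aeval_X, Equiv.refl_apply, if_true, one_smul, Zp,
        Matrix.sum_apply, Matrix.smul_apply, Matrix.map_apply, smul_eq_mul, map_mul, hX]
      refine Finset.sum_congr rfl fun i _ => ?_
      rw [← algebraMap_eq, AlgHom.commutes, algebraMap_eq, smul_eq_C_mul, smul_eq_C_mul, ← two_mul]
      simp only [map_ofNat]; ring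
    · simp only [map_sum, map_smul, map_add, hΨ, aeval_X, Equiv.refl_apply, if_neg h, if_neg (Ne.symm h),
        zero_smul, add_zero, smul_zero, Finset.sum_const_zero]
  have h3 : Ψ (trace (Zp (TL A) ^ k)) = ∑ u, Θ u (trace (Zp A ^ k)) := by
    have e1 : Ψ (trace (Zp (TL A) ^ k)) = trace (Ψ.mapMatrix (Zp (TL A) ^ k)) := by
      simp [trace]
    rw [e1, map_pow, h2, ← blockDiagonal_pow, trace_blockDiagonal]
    refine Finset.sum_congr rfl fun u _ => ?_
    rw [Pi.pow_apply, ← map_pow]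
    simp [trace]
  rw [h3, map_sum]
  have h4 : ∀ u, gE (tb1 (κ := κ)) (Θ u (trace (Zp A ^ k))) = gE (fun _ => 1) (trace (Zp A ^ k)) := by
    intro u
    refine gE_lin _ _ _ ?_ _
    intro i i'
    by_cases h : i = i'
    · subst h
      rw [if_pos rfl, Finset.sum_eq_single (i, u, u)]
      · simp [tb1]; norm_num
      · intro j _ hj; simp [hj]
      · simp
    · rw [if_neg h]
      refine Finset.sum_eq_zero fun j _ => ?_
      by_cases h1 : j = (i, u, u)
      · subst h1; simp [h]
      · simp [h1]
  simp only [h4, Finset.sum_const, Finset.card_univ, nsmul_eq_mul]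

end Tensor


section Free
open Matrix MvPolynomial
open scoped Kronecker

section gen
variable {ι J : Type*} [Fintype ι] [DecidableEq ι] [Fintype J]

theorem ibp_trace (b : J → ℝ) (L : J → Matrix ι ι ℝ) (R : Matrix ι ι ℝ) (q : ℕ) :
    gE b (trace (cm R * Zp L ^ (q+2))) = ∑ i ∈ Finset.range (q+1), ∑ j, b j *
      gE b (trace (cm R * cm (L j) * Zp L ^ i * cm (L j) * Zp L ^ (q - i))) := by
  have e1 : trace (cm R * Zp L ^ (q+2)) = ∑ j, X j * trace (cm R * cm (L j) * Zp L ^ (q+1)) := by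
    rw [pow_succ' (Zp L) (q+1)]
    generalize Zp L ^ (q+1) = W
    rw [Zp, Matrix.sum_mul, Matrix.mul_sum, trace_sum]
    refine Finset.sum_congr rfl fun j _ => ?_
    rw [Matrix.smul_mul, Matrix.mul_smul, trace_smul, smul_eq_mul, Matrix.mul_assoc]
    rfl
  rw [e1, map_sum, Finset.sum_comm]
  refine Finset.sum_congr rfl fun j _ => ?_
  rw [gE_ibp, pderiv_trace, pm_mul, ← cm_mul, pm_cm, zero_mul, zero_add, pm_pow, Matrix.mul_sum,
    trace_sum, map_sum, Finset.mul_sum]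
  refine Finset.sum_congr rfl fun i _ => ?_
  rw [cm_mul]
  simp only [← Matrix.mul_assoc, Nat.add_sub_cancel]

theorem pow_two_le (i l : ℕ) (x y : ℝ) (hx : 0 ≤ x) (hy : 0 ≤ y) :
    x ^ i * y ^ l ≤ x ^ (i+l) + y ^ (i+l) := by
  rcases le_total x y with h | h
  · have : x ^ i * y ^ l ≤ y ^ i * y ^ l := by gcongr
    rw [← pow_add] at this
    have := pow_nonneg hx (i+l)
    linarith
  · have : x ^ i * y ^ l ≤ x ^ i * x ^ l := by gcongr
    rw [← pow_add] at this
    have := pow_nonneg hy (i+l)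
    linarith

theorem trace_pair {b : J → ℝ} {L : J → Matrix ι ι ℝ} {v2 s2 : ℝ} (hL : ∀ j, (L j).IsSymm)
    (h : Fam b L v2 s2) {U : Matrix ι ι ℝ} {l : ι → ℝ} (hU : Uᵀ * U = 1) (hU' : U * Uᵀ = 1)
    {Z : Matrix ι ι ℝ} (hZ : Z = U * diagonal l * Uᵀ) (i k : ℕ) :
    ∑ j, b j * trace (L j * Z ^ i * L j * Z ^ k) ≤ 2 * s2 * ∑ α, |l α| ^ (i + k) := by
  have hUc := contr_orth hU hU'
  have hF := h.trans hUc.tr hUc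
  set P : J → Matrix ι ι ℝ := fun j => Uᵀ * L j * U with hP
  have e : ∀ j, trace (L j * Z ^ i * L j * Z ^ k) =
      ∑ α, ∑ β, P j α β ^ 2 * (l β ^ i * l α ^ k) := by
    intro j
    have : trace (L j * Z ^ i * L j * Z ^ k) =
        trace ((P j * diagonal (fun a => l a ^ i)) * (P j * diagonal (fun a => l a ^ k))) := by
      rw [hZ, spec_pow hU hU', spec_pow hU hU']
      simp only [← Matrix.mul_assoc, hP]
      rw [Matrix.trace_mul_comm]
      simp only [← Matrix.mul_assoc]
    rw [this]
    have hsym : ∀ α β, P j β α = P j α β := by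
      intro α β
      have : (P j)ᵀ = P j := by
        simp only [hP, transpose_mul, transpose_transpose, (hL j).eq, Matrix.mul_assoc]
      exact congrFun (congrFun this α) β
    simp only [trace, diag, Matrix.mul_apply (M := P j * _), mul_diagonal]
    refine Finset.sum_congr rfl fun α _ => Finset.sum_congr rfl fun β _ => ?_
    rw [hsym α β]; ring
  simp only [e]
  have hb := h.hb
  have row : ∀ α, ∑ β, ∑ j, b j * P j α β ^ 2 ≤ s2 := by
    intro α
    have := hF.hr (Pi.single α 1)
    rw [nsq_single1, mul_one] at this
    refine le_trans (le_of_eq ?_) this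
    rw [Finset.sum_comm]
    refine Finset.sum_congr rfl fun j _ => ?_
    rw [nsq_single, Finset.mul_sum]; rfl
  have col : ∀ β, ∑ α, ∑ j, b j * P j α β ^ 2 ≤ s2 := by
    intro α
    have := hF.hc (Pi.single α 1)
    rw [nsq_single1, mul_one] at this
    refine le_trans (le_of_eq ?_) this
    rw [Finset.sum_comm]
    refine Finset.sum_congr rfl fun j _ => ?_
    rw [nsq_single, Finset.mul_sum]
  calc ∑ j, b j * ∑ α, ∑ β, P j α β ^ 2 * (l β ^ i * l α ^ k)
      ≤ ∑ j, ∑ α, ∑ β, (b j * P j α β ^ 2 * |l β| ^ (i+k) + b j * P j α β ^ 2 * |l α| ^ (i+k)) := by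
        refine Finset.sum_le_sum fun j _ => ?_
        simp only [Finset.mul_sum]
        refine Finset.sum_le_sum fun α _ => Finset.sum_le_sum fun β _ => ?_
        rw [← mul_add, ← mul_assoc]
        refine mul_le_mul_of_nonneg_left ?_ (mul_nonneg (hb j) (sq_nonneg _))
        refine (le_abs_self _).trans ?_
        rw [abs_mul, abs_pow, abs_pow]
        exact pow_two_le _ _ _ _ (abs_nonneg _) (abs_nonneg _)
    _ = ∑ β, (∑ α, ∑ j, b j * P j α β ^ 2) * |l β| ^ (i+k) +
        ∑ α, (∑ β, ∑ j, b j * P j α β ^ 2) * |l α| ^ (i+k) := by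
        simp only [Finset.sum_add_distrib, Finset.sum_mul]
        congr 1
        · simp only [← Fintype.sum_prod_type']
          exact Fintype.sum_equiv ⟨fun x => (x.2.2, x.2.1, x.1), fun x => (x.2.2, x.2.1, x.1),
            fun _ => rfl, fun _ => rfl⟩ _ _ (fun _ => rfl)
        · simp only [← Fintype.sum_prod_type']
          exact Fintype.sum_equiv ⟨fun x => (x.2.1, x.2.2, x.1), fun x => (x.2.2, x.1, x.2.1),
            fun _ => rfl, fun _ => rfl⟩ _ _ (fun _ => rfl)
    _ ≤ ∑ β, s2 * |l β| ^ (i+k) + ∑ α, s2 * |l α| ^ (i+k) := by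
        refine add_le_add (Finset.sum_le_sum fun β _ => ?_) (Finset.sum_le_sum fun β _ => ?_)
        · exact mul_le_mul_of_nonneg_right (col β) (by positivity)
        · exact mul_le_mul_of_nonneg_right (row β) (by positivity)
    _ = _ := by rw [← Finset.mul_sum]; ring

/-- crude constants -/
noncomputable def crude (s2 : ℝ) : ℕ → ℝ
  | 0 => 1
  | (m+1) => (2 * m + 1) * (2 * s2) * crude s2 m

theorem crude_bound {b : J → ℝ} {L : J → Matrix ι ι ℝ} {v2 s2 : ℝ} (hL : ∀ j, (L j).IsSymm)
    (h : Fam b L v2 s2) (m : ℕ) :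
    gE b (trace (Zp L ^ (2 * m))) ≤ crude s2 m * Fintype.card ι := by
  induction m with
  | zero =>
    simp only [Nat.mul_zero, pow_zero, trace_one, crude, one_mul]
    have : ((Fintype.card ι : ℕ) : MvPolynomial J ℝ) = (Fintype.card ι : ℝ) • 1 := by
      rw [smul_eq_C_mul]; simp
    rw [this, map_smul, gE_one]; simp
  | succ m ih =>
    have e := ibp_trace b L 1 (2*m)
    simp only [cm_one, Matrix.one_mul] at e
    rw [show 2 * (m+1) = 2*m+2 by ring, e]
    have each : ∀ i ∈ Finset.range (2*m+1), ∑ j, b j *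
      gE b (trace (cm (L j) * Zp L ^ i * cm (L j) * Zp L ^ (2*m - i))) ≤
        2 * s2 * gE b (trace (Zp L ^ (2*m))) := by
      intro i hi
      have hi' := Finset.mem_range.1 hi
      have := gE_mono b h.hb (∑ j, b j • trace (cm (L j) * Zp L ^ i * cm (L j) * Zp L ^ (2*m - i)))
        ((2 * s2) • trace (Zp L ^ (2*m))) ?_
      · simpa only [map_sum, map_smul, smul_eq_mul] using this
      · intro x
        obtain ⟨U, l, h2, h1, h3⟩ := spec _ (Zr_symm hL x)
        have tp := trace_pair hL h h1 h2 h3 i (2*m-i)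
        rw [show i + (2*m-i) = 2*m by omega] at tp
        simp only [map_sum, smul_eq_C_mul, map_mul (eval x), eval_C]
        simp only [ev_trace, map_pow, map_mul, ev_Zp, ev_cm]
        refine tp.trans (le_of_eq ?_)
        rw [h3, spec_trace h1 h2]
        congr 1
        refine Finset.sum_congr rfl fun α _ => ?_
        rw [(even_two_mul m).pow_abs]
    refine (Finset.sum_le_sum each).trans ?_
    rw [Finset.sum_const, Finset.card_range, nsmul_eq_mul]
    have hs := h.hs0
    calc _ ≤ ((2*m+1 : ℕ):ℝ) * (2 * s2 * (crude s2 m * Fintype.card ι)) := by gcongr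
      _ = _ := by rw [crude]; push_cast; ring
end gen

section mats
variable {ι I : Type*} [Fintype ι] [DecidableEq ι] [Fintype I] [DecidableEq I]

/-- free moments -/
noncomputable def Fr (A : I → Matrix ι ι ℝ) : ℕ → Matrix ι ι ℝ
  | 0 => 1
  | 1 => 0
  | (q+2) => ∑ i : Fin (q+1), ((∑ a, A a * Fr A i * A a) * Fr A (q - i))
termination_by q => q
decreasing_by all_goals omega

theorem Fr_step (A : I → Matrix ι ι ℝ) (q : ℕ) :
    Fr A (q+2) = ∑ i ∈ Finset.range (q+1), ((∑ a, A a * Fr A i * A a) * Fr A (q - i)) := by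
  rw [Fr, Finset.sum_range]

/-- bilinear bound -/
def Bd (M : Matrix ι ι ℝ) (K : ℝ) : Prop := ∀ x y, 2 * (y ⬝ᵥ (M *ᵥ x)) ≤ K * (nsq x + nsq y)

theorem nsq_smul (c : ℝ) (x : ι → ℝ) : nsq (c • x) = c ^ 2 * nsq x := by
  simp [nsq, mul_pow, Finset.mul_sum]

theorem Bd.sq {M : Matrix ι ι ℝ} {K : ℝ} (h : Bd M K) (hK : 0 ≤ K) (x : ι → ℝ) :
    nsq (M *ᵥ x) ≤ K ^ 2 * nsq x := by
  rcases hK.eq_or_lt with h0 | h0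
  · subst h0
    have := h x (M *ᵥ x)
    rw [← nsq_dot] at this
    linarith
  · have := h x ((1/K) • (M *ᵥ x))
    rw [smul_dotProduct, ← nsq_dot, nsq_smul, smul_eq_mul] at this
    generalize nsq (M *ᵥ x) = n at *
    generalize nsq x = m at *
    have e : K * (m + (1/K)^2 * n) = K * m + (1/K) * n := by field_simp
    rw [e] at this
    have : 1/K * n ≤ K * m := by linarith
    have h2 := mul_le_mul_of_nonneg_left this h0.le
    have e2 : K * (1/K * n) = n := by field_simp
    rw [e2] at h2
    linarith

theorem Bd.of_sq {M : Matrix ι ι ℝ} {K : ℝ} (hK : 0 ≤ K) (h : ∀ x, nsq (M *ᵥ x) ≤ K ^ 2 * nsq x) :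
    Bd M K := by
  intro x y
  have key : ∀ c : ℝ, 2 * c * (y ⬝ᵥ (M *ᵥ x)) ≤ c ^ 2 * nsq y + nsq (M *ᵥ x) := by
    intro c
    have := nsq_nonneg (c • y - M *ᵥ x)
    rw [nsq_dot, sub_dotProduct, dotProduct_sub, dotProduct_sub, smul_dotProduct, dotProduct_smul,
      smul_dotProduct, dotProduct_smul, ← nsq_dot, ← nsq_dot, dotProduct_comm (M *ᵥ x) y] at this
    simp only [smul_eq_mul] at this
    linarith
  have hx := h x
  rcases hK.eq_or_lt with h0 | h0
  · subst h0
    have n0 : nsq (M *ᵥ x) = 0 := le_antisymm (by simpa using hx) (nsq_nonneg _)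
    have : M *ᵥ x = 0 := by
      rw [nsq_dot] at n0
      exact dotProduct_self_eq_zero.1 n0
    rw [this]; simp
  · have h2 := key K
    have h3 : K * (2 * (y ⬝ᵥ (M *ᵥ x))) ≤ K * (K * (nsq x + nsq y)) := by nlinarith
    exact le_of_mul_le_mul_left h3 h0

theorem Bd.mul {M N : Matrix ι ι ℝ} {K K' : ℝ} (hK : 0 ≤ K) (hK' : 0 ≤ K') (h : Bd M K) (h' : Bd N K') :
    Bd (M * N) (K * K') := by
  refine Bd.of_sq (mul_nonneg hK hK') fun x => ?_
  rw [← mulVec_mulVec]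
  have h1 := h.sq hK (N *ᵥ x)
  have h2 := h'.sq hK' x
  have h3 := mul_le_mul_of_nonneg_left h2 (sq_nonneg K)
  rw [mul_pow, mul_assoc]
  linarith

theorem Bd.sum {α : Type*} (s : Finset α) (M : α → Matrix ι ι ℝ) (K : α → ℝ)
    (h : ∀ i ∈ s, Bd (M i) (K i)) : Bd (∑ i ∈ s, M i) (∑ i ∈ s, K i) := by
  intro x y
  rw [Matrix.sum_mulVec, dotProduct_sum, Finset.mul_sum, Finset.sum_mul]
  exact Finset.sum_le_sum fun i hi => h i hi x y

theorem Bd.conj {A : I → Matrix ι ι ℝ} (hA : ∀ i, (A i).IsSymm) {v2 s2 : ℝ}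
    (hF : Fam (fun _ : I => 1) A v2 s2) {M : Matrix ι ι ℝ} {K : ℝ} (hK : 0 ≤ K) (h : Bd M K) :
    Bd (∑ a, A a * M * A a) (s2 * K) := by
  intro x y
  rw [Matrix.sum_mulVec, dotProduct_sum, Finset.mul_sum]
  have e : ∀ a, 2 * (y ⬝ᵥ ((A a * M * A a) *ᵥ x)) ≤ K * (nsq (A a *ᵥ x) + nsq (A a *ᵥ y)) := by
    intro a
    have := h (A a *ᵥ x) (A a *ᵥ y)
    refine le_trans (le_of_eq ?_) this
    rw [← mulVec_mulVec, ← mulVec_mulVec, dotProduct_mulVec, ← mulVec_transpose, hA a]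
  refine (Finset.sum_le_sum fun a _ => e a).trans ?_
  rw [← Finset.mul_sum, Finset.sum_add_distrib]
  have h1 := hF.hc x
  have h2 := hF.hc y
  simp only [one_mul] at h1 h2
  have := mul_le_mul_of_nonneg_left (add_le_add h1 h2) hK
  linarith

/-- scalar recursion -/
noncomputable def hr : ℕ → ℝ
  | 0 => 1
  | 1 => 0
  | (q+2) => ∑ i : Fin (q+1), 1/4 * (hr i * hr (q - i))
termination_by q => q
decreasing_by all_goals omega

theorem hr_step (q : ℕ) : hr (q+2) = ∑ i ∈ Finset.range (q+1), 1/4 * (hr i * hr (q - i)) := by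
  rw [hr, Finset.sum_range]

theorem hr_nonneg (q : ℕ) : 0 ≤ hr q := by
  induction q using Nat.strong_induction_on with
  | _ q ih =>
    match q, ih with
    | 0, _ => simp [hr]
    | 1, _ => simp [hr]
    | q+2, ih =>
      rw [hr_step]
      refine Finset.sum_nonneg fun i hi => ?_
      have := Finset.mem_range.1 hi
      have h1 := ih i (by omega)
      have h2 := ih (q-i) (by omega)
      positivity

theorem hr_sum (n : ℕ) : ∑ q ∈ Finset.range n, hr q ≤ 2 := by
  induction n using Nat.twoStepInduction with
  | zero => simp
  | one => simp [hr]
  | more n ih _ =>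
    rw [Finset.sum_range_succ', Finset.sum_range_succ']
    simp only [hr_step]
    have e := Finset.sum_range_diag_flip n (fun i k => 1/4 * (hr i * hr k))
    rw [e]
    have h1 : ∑ m ∈ Finset.range n, ∑ k ∈ Finset.range (n-m), 1/4 * (hr m * hr k) ≤
        ∑ m ∈ Finset.range n, ∑ k ∈ Finset.range n, 1/4 * (hr m * hr k) := by
      refine Finset.sum_le_sum fun m _ => ?_
      refine Finset.sum_le_sum_of_subset_of_nonneg (Finset.range_mono (by omega)) fun k _ _ => ?_
      have := hr_nonneg m; have := hr_nonneg k
      positivity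
    have h2 : ∑ m ∈ Finset.range n, ∑ k ∈ Finset.range n, 1/4 * (hr m * hr k) =
        1/4 * ((∑ m ∈ Finset.range n, hr m) * (∑ m ∈ Finset.range n, hr m)) := by
      rw [Finset.sum_mul_sum]; simp only [Finset.mul_sum]
    have h3 : 0 ≤ ∑ m ∈ Finset.range n, hr m := Finset.sum_nonneg fun _ _ => hr_nonneg _
    have h4 : hr 0 = 1 := by simp [hr]
    have h5 : hr (0+1) = 0 := by simp [hr]
    rw [h4, h5]
    nlinarith

theorem hr_le (q : ℕ) : hr q ≤ 2 :=
  (Finset.single_le_sum (f := hr) (fun i _ => hr_nonneg i) (Finset.self_mem_range_succ q)).trans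
    (hr_sum (q+1))

theorem Fr_Bd {A : I → Matrix ι ι ℝ} (hA : ∀ i, (A i).IsSymm) {v2 s : ℝ} (hs : 0 ≤ s)
    (hF : Fam (fun _ : I => 1) A v2 (s^2)) (q : ℕ) : Bd (Fr A q) (hr q * (2*s)^q) := by
  induction q using Nat.strong_induction_on with
  | _ q ih =>
    match q, ih with
    | 0, _ =>
      have : Fr A 0 = 1 := by rw [Fr]
      rw [this]
      refine Bd.of_sq (by simp [hr]) fun x => by simp [hr]
    | 1, _ =>
      have : Fr A 1 = 0 := by rw [Fr]
      rw [this]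
      refine Bd.of_sq (by simp [hr]) fun x => by simp [hr, nsq]
    | q+2, ih =>
      rw [Fr_step, hr_step, Finset.sum_mul]
      refine Bd.sum _ _ _ fun i hi => ?_
      have := Finset.mem_range.1 hi
      have h1 := ih i (by omega)
      have h2 := ih (q-i) (by omega)
      have n1 : 0 ≤ hr i * (2*s)^i := mul_nonneg (hr_nonneg _) (by positivity)
      have n2 : 0 ≤ hr (q-i) * (2*s)^(q-i) := mul_nonneg (hr_nonneg _) (by positivity)
      have h3 := Bd.mul (mul_nonneg (sq_nonneg s) n1) n2 (Bd.conj hA hF n1 h1) h2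
      have e : s ^ 2 * (hr i * (2*s)^i) * (hr (q-i) * (2*s)^(q-i)) =
          1/4 * (hr i * hr (q-i)) * (2*s)^(q+2) := by
        have : (2*s)^(q+2) = (2*s)^i * (2*s)^(q-i) * (2*s)^2 := by
          rw [← pow_add, ← pow_add]; congr 1; omega
        rw [this]; ring
      rw [e] at h3
      exact h3

theorem Fr_trace {A : I → Matrix ι ι ℝ} (hA : ∀ i, (A i).IsSymm) {v2 s : ℝ} (hs : 0 ≤ s)
    (hF : Fam (fun _ : I => 1) A v2 (s^2)) (q : ℕ) :
    trace (Fr A q) ≤ Fintype.card ι * (2 * (2*s)^q) := by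
  have : ∀ x ∈ (Finset.univ : Finset ι), Fr A q x x ≤ 2 * (2*s)^q := by
    intro x _
    have h1 := Fr_Bd hA hs hF q (Pi.single x 1) (Pi.single x 1)
    rw [nsq_single1] at h1
    simp at h1
    have h2 := mul_le_mul_of_nonneg_right (hr_le q) (show 0 ≤ (2*s)^q by positivity)
    linarith
  refine (Finset.sum_le_sum this).trans ?_
  rw [Finset.sum_const, Finset.card_univ, nsmul_eq_mul]

end mats
end Free


section Limit
open Matrix MvPolynomial Filter Topology
open scoped Kronecker

variable {ι κ I : Type*} [Fintype ι] [DecidableEq ι] [Fintype κ] [DecidableEq κ] [Fintype I] [DecidableEq I]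

theorem Em_cm_mul {ι J : Type*} [Fintype ι] [DecidableEq ι] [Fintype J] (b : J → ℝ) (R : Matrix ι ι ℝ)
    (M : Matrix ι ι (MvPolynomial J ℝ)) : Em b (cm R * M) = R * Em b M := by
  ext x y
  simp only [Em, Matrix.map_apply, Matrix.mul_apply, cm, map_sum]
  refine Finset.sum_congr rfl fun z _ => ?_
  rw [← smul_eq_C_mul, map_smul, smul_eq_mul]

theorem Rs_contr (x y : ι) : Contr ((single x y (1:ℝ)) ⊗ₖ (1 : Matrix κ κ ℝ)) := by
  have key : ∀ (x y : ι) (z : ι × κ → ℝ), nsq (((single x y (1:ℝ)) ⊗ₖ (1 : Matrix κ κ ℝ)) *ᵥ z) ≤ nsq z := by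
    intro x y z
    have e : ∀ p : ι × κ, (((single x y (1:ℝ)) ⊗ₖ (1 : Matrix κ κ ℝ)) *ᵥ z) p =
        if p.1 = x then z (y, p.2) else 0 := by
      rintro ⟨p, u⟩
      simp only [mulVec, dotProduct, kroneckerMap_apply, Fintype.sum_prod_type, single_apply, Matrix.one_apply]
      by_cases h : p = x
      · subst h
        simp only [true_and, if_true]
        rw [Finset.sum_eq_single y]
        · simp
        · intro w _ hw; simp [Ne.symm hw]
        · simp
      · simp [h, Ne.symm h]
    simp only [nsq, e, Fintype.sum_prod_type]
    rw [Finset.sum_eq_single x]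
    · simp only [if_true]
      exact Finset.single_le_sum (f := fun i => ∑ u, z (i, u) ^ 2)
        (fun i _ => Finset.sum_nonneg fun _ _ => sq_nonneg _) (Finset.mem_univ y)
    · intro p _ hp; simp [hp]
    · simp
  refine ⟨key x y, ?_⟩
  rw [← kroneckerMap_transpose, transpose_single, transpose_one]
  exact key y x

theorem trace_Rs (x y : ι) (M : Matrix ι ι ℝ) :
    trace (((single y x (1:ℝ)) ⊗ₖ (1 : Matrix κ κ ℝ)) * (M ⊗ₖ (1 : Matrix κ κ ℝ))) = Fintype.card κ * M x y := by
  rw [← mul_kronecker_mul, trace_kronecker, Matrix.mul_one, trace_one, Matrix.trace_single_mul]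
  simp [mul_comm]

/-- error constant -/
noncomputable def errc (v2 s2 c : ℝ) (q : ℕ) : ℝ :=
  ∑ i ∈ Finset.range (q+1), (i * (q - i : ℕ) : ℝ) * (v2 * s2 * (4 * ((1 + crude s2 (q-2)) * c)))

theorem goe_err [Inhabited κ] {A : I → Matrix ι ι ℝ} (hA : ∀ i, (A i).IsSymm) {v2 s2 : ℝ}
    (hF : Fam (fun _ : I => 1) A v2 s2) (q : ℕ) (x y : ι) :
    |Mk A (tb0 (κ := κ)) (q+2) x y - (∑ i ∈ Finset.range (q+1),
      ((∑ a, A a * Mk A (tb0 (κ := κ)) i * A a) * Mk A (tb0 (κ := κ)) (q - i))) x y|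
      ≤ errc v2 s2 (Fintype.card ι) q * (2 / (Fintype.card κ + 1)) := by
  have hT := Fam_tb0 (κ := κ) hA hF
  set R := (single y x (1:ℝ)) ⊗ₖ (1 : Matrix κ κ ℝ) with hR
  have hRc : Contr R := Rs_contr y x
  have h1 := ibp_trace (tb0 (κ := κ)) (TL A) R q
  rw [trace_Em, Em_cm_mul, Em_eq A _ BInv_tb0, hR, trace_Rs, ← hR] at h1
  have hmain : ∀ i, ∑ j, tb0 j * trace (R * TL A j * Em (tb0 (κ := κ)) (Zp (TL A) ^ i) * TL A j *
      Em (tb0 (κ := κ)) (Zp (TL A) ^ (q - i))) = Fintype.card κ *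
      ((∑ a, A a * Mk A (tb0 (κ := κ)) i * A a) * Mk A (tb0 (κ := κ)) (q - i)) x y := by
    intro i
    rw [Em_eq A _ BInv_tb0, Em_eq A _ BInv_tb0]
    have h0 := sum_TL A (fun _ _ : κ => (1 / (2 * ((Fintype.card κ:ℝ) + 1)))) sumG0 (Mk A (tb0 (κ := κ)) i)
    have := congrArg (fun M => trace (R * (M * (Mk A (tb0 (κ := κ)) (q-i) ⊗ₖ (1 : Matrix κ κ ℝ))))) h0
    simp only [← mul_kronecker_mul, Matrix.mul_one] at this
    rw [hR, trace_Rs, ← hR] at this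
    rw [← this]
    simp only [Matrix.sum_mul, Matrix.mul_sum, trace_sum, Matrix.smul_mul, Matrix.mul_smul, trace_smul, smul_eq_mul,
      ← Matrix.mul_assoc]
    rfl
  have hTb : gE (tb0 (κ := κ)) (trace (1 + Zp (TL A) ^ (2 * (q-2)))) ≤
      (1 + crude s2 (q-2)) * (Fintype.card ι * Fintype.card κ) := by
    have c := crude_bound (TL_symm hA) hT (q-2)
    have c0 := crude_bound (TL_symm hA) hT 0
    simp only [Nat.mul_zero, pow_zero, crude, one_mul] at c0
    rw [trace_add, map_add]
    rw [Fintype.card_prod] at c c0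
    push_cast at c c0
    linarith
  have hcov : ∀ i ∈ Finset.range (q+1), |∑ j, tb0 j * gE (tb0 (κ := κ)) (trace (cm R * cm (TL A j) * Zp (TL A) ^ i * cm (TL A j) * Zp (TL A) ^ (q - i)))
      - Fintype.card κ * ((∑ a, A a * Mk A (tb0 (κ := κ)) i * A a) * Mk A (tb0 (κ := κ)) (q - i)) x y| ≤
      (i * (q - i : ℕ) : ℝ) * (v2 * s2 * (4 * ((1 + crude s2 (q-2)) * Fintype.card ι))) * (2 / (Fintype.card κ + 1)) * Fintype.card κ := by
    intro i hi
    have hi' := Finset.mem_range.1 hi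
    have := cov_bound (TL_symm hA) hT hT hRc i (q-i) (q-2) (by omega) _ (Dom_any (TL A) (q-2))
    simp only [mul_sub, Finset.sum_sub_distrib, hmain i] at this
    refine this.trans ?_
    have hv := hF.hv0
    have hs := hF.hs0
    calc _ ≤ (i:ℝ) * (q - i : ℕ) * (2 / (Fintype.card κ + 1) * v2 * s2 * (4 * ((1 + crude s2 (q-2)) * (Fintype.card ι * Fintype.card κ)))) := by
          gcongr
      _ = _ := by ring
  have hk : (0:ℝ) < Fintype.card κ := by exact_mod_cast Fintype.card_pos
  rw [← mul_le_mul_iff_left₀ hk]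
  rw [← abs_of_pos hk, ← abs_mul, abs_of_pos hk, sub_mul, mul_comm _ (Fintype.card κ : ℝ), h1, Matrix.sum_apply,
    Finset.sum_mul, ← Finset.sum_sub_distrib, errc, Finset.sum_mul, Finset.sum_mul]
  refine (Finset.abs_sum_le_sum_abs _ _).trans (Finset.sum_le_sum fun i hi => ?_)
  rw [mul_comm _ (Fintype.card κ : ℝ)]
  exact hcov i hi

theorem Mk_zero [Inhabited κ] (A : I → Matrix ι ι ℝ) (b : I × κ × κ → ℝ) : Mk A b 0 = 1 := by
  ext x y
  simp only [Mk, Em, Matrix.of_apply, pow_zero, Matrix.map_apply, Matrix.one_apply, Prod.mk.injEq, and_true]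
  split_ifs
  · exact gE_one b
  · exact map_zero _

theorem Mk_one [Inhabited κ] (A : I → Matrix ι ι ℝ) (b : I × κ × κ → ℝ) : Mk A b 1 = 0 := by
  have hX : ∀ j, gE b (X j) = 0 := by
    intro j
    have := gE_ibp b j 1
    rw [mul_one] at this
    rw [this]; simp
  ext x y
  simp only [Mk, Em, Matrix.of_apply, pow_one, Matrix.map_apply, Zp_TL, map_sum, map_smul, map_add, hX]
  simp

theorem Mk_tendsto {A : I → Matrix ι ι ℝ} (hA : ∀ i, (A i).IsSymm) {v2 s2 : ℝ}
    (hF : Fam (fun _ : I => 1) A v2 s2) (q : ℕ) :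
    Tendsto (fun N : ℕ => Mk A (tb0 (κ := Fin (N+1))) q) atTop (𝓝 (Fr A q)) := by
  induction q using Nat.strong_induction_on with
  | _ q ih =>
    match q, ih with
    | 0, _ =>
      have : Fr A 0 = 1 := by rw [Fr]
      simp only [Mk_zero, this]
      exact tendsto_const_nhds
    | 1, _ =>
      have : Fr A 1 = 0 := by rw [Fr]
      simp only [Mk_one, this]
      exact tendsto_const_nhds
    | q+2, ih =>
      rw [Fr_step]
      have h1 : Tendsto (fun N : ℕ => ∑ i ∈ Finset.range (q+1),
        ((∑ a, A a * Mk A (tb0 (κ := Fin (N+1))) i * A a) * Mk A (tb0 (κ := Fin (N+1))) (q - i))) atTop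
        (𝓝 (∑ i ∈ Finset.range (q+1), ((∑ a, A a * Fr A i * A a) * Fr A (q - i)))) := by
        refine tendsto_finsetSum _ fun i hi => ?_
        have := Finset.mem_range.1 hi
        refine Tendsto.mul (tendsto_finsetSum _ fun a _ => ?_) (ih (q-i) (by omega))
        exact (tendsto_const_nhds.mul (ih i (by omega))).mul tendsto_const_nhds
      refine tendsto_pi_nhds.2 fun x => tendsto_pi_nhds.2 fun y => ?_
      have h2 := tendsto_pi_nhds.1 (tendsto_pi_nhds.1 h1 x) y
      have h3 : Tendsto (fun N : ℕ => errc v2 s2 (Fintype.card ι) q * (2 / (((N+1:ℕ):ℝ) + 1))) atTop (𝓝 0) := by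
        have : Tendsto (fun N : ℕ => (2:ℝ) / (((N+1:ℕ):ℝ) + 1)) atTop (𝓝 0) := by
          refine Tendsto.div_atTop tendsto_const_nhds ?_
          exact tendsto_atTop_add_const_right _ _ (tendsto_natCast_atTop_atTop.comp (tendsto_add_atTop_nat 1))
        simpa using this.const_mul (errc v2 s2 (Fintype.card ι) q)
      have h4 := squeeze_zero_norm (fun N : ℕ => by
        have := goe_err (κ := Fin (N+1)) hA hF q x y
        rw [Fintype.card_fin] at this
        rw [Real.norm_eq_abs]
        exact this) h3
      have := h4.add h2
      simpa using this

theorem moment_bound {A : I → Matrix ι ι ℝ} (hA : ∀ i, (A i).IsSymm) {v2 s : ℝ} (hs : 0 ≤ s)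
    (hF : Fam (fun _ : I => 1) A v2 (s^2)) (q : ℕ) (r : ℝ) (hr : 0 < r)
    (hrv : (q+2:ℝ)^3*(v2*s^2) ≤ r^2) :
    gE (fun _ => 1) (trace (Zp A ^ (2*(q+2)))) ≤
      Real.exp (16*(q+2)) * (Fintype.card ι * (2*(2*s)^(2*(q+2))) + r^(q+2) * Fintype.card ι) := by
  have hN : ∀ N : ℕ, gE (fun _ => 1) (trace (Zp A ^ (2*(q+2)))) ≤
      Real.exp (16*(q+2)) * (trace (Mk A (tb0 (κ := Fin (N+1))) (2*(q+2))) + r^(q+2) * Fintype.card ι) := by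
    intro N
    have h0 : Fam (tb0 (κ := Fin (N+1))) (TL A) v2 (s^2) := by
      refine (Fam_tb0 hA hF).mono ?_
      have : (2 / ((Fintype.card (Fin (N+1)):ℝ) + 1)) ≤ 1 := by
        rw [div_le_one (by positivity)]
        simp only [Fintype.card_fin]; push_cast
        have : (0:ℝ) ≤ N := by positivity
        linarith
      have := mul_le_mul_of_nonneg_right this hF.hv0
      linarith
    have h1 := interp_main (TL_symm hA) h0 (Fam_tb1 hA hF) (fun s k l => hmain_T A s k l) q r hr hrv
    rw [end0 A _ BInv_tb0, end1, Fintype.card_prod] at h1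
    have hk : (0:ℝ) < Fintype.card (Fin (N+1)) := by exact_mod_cast Fintype.card_pos
    refine le_of_mul_le_mul_left (h1.trans (le_of_eq ?_)) hk
    push_cast; ring
  have ht : Tendsto (fun N : ℕ => Real.exp (16*(q+2)) * (trace (Mk A (tb0 (κ := Fin (N+1))) (2*(q+2))) + r^(q+2) * Fintype.card ι)) atTop
      (𝓝 (Real.exp (16*(q+2)) * (trace (Fr A (2*(q+2))) + r^(q+2) * Fintype.card ι))) := by
    refine Tendsto.const_mul _ (Tendsto.add_const _ ?_)
    exact ((continuous_id.matrix_trace).tendsto _).comp (Mk_tendsto hA hF _)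
  refine (ge_of_tendsto' ht hN).trans ?_
  have := Fr_trace hA hs hF (2*(q+2))
  gcongr

end Limit


section Final
open Matrix MvPolynomial Filter Topology

theorem opn_nonneg {m : Type*} [Fintype m] [DecidableEq m] (M : Matrix m m ℝ) : 0 ≤ opNorm M := norm_nonneg _

theorem nsq_norm {m : Type*} [Fintype m] (x : EuclideanSpace ℝ m) : nsq (fun i => x i) = ‖x‖ ^ 2 := by
  rw [EuclideanSpace.norm_sq_eq]
  simp [nsq]

theorem quad_le {m : Type*} [Fintype m] [DecidableEq m] (M : Matrix m m ℝ) (x : m → ℝ) :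
    x ⬝ᵥ (M *ᵥ x) ≤ opNorm M * nsq x := by
  set z : EuclideanSpace ℝ m := WithLp.toLp 2 x with hz
  have h1 := (LinearMap.toContinuousLinearMap (Matrix.toEuclideanLin M)).le_opNorm z
  have h2 := real_inner_le_norm z (LinearMap.toContinuousLinearMap (Matrix.toEuclideanLin M) z)
  have h3 : inner ℝ z (LinearMap.toContinuousLinearMap (Matrix.toEuclideanLin M) z) = x ⬝ᵥ (M *ᵥ x) := by
    rw [PiLp.inner_apply, dotProduct]
    refine Finset.sum_congr rfl fun i _ => ?_
    simp [hz, mul_comm]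
  have h4 : nsq x = ‖z‖ ^ 2 := nsq_norm z
  rw [h3] at h2
  rw [h4, opNorm]
  nlinarith [norm_nonneg z]

theorem opn_le {m : Type*} [Fintype m] [DecidableEq m] (M : Matrix m m ℝ) (K : ℝ) (hK : 0 ≤ K)
    (h : ∀ x, nsq (M *ᵥ x) ≤ K ^ 2 * nsq x) : opNorm M ≤ K := by
  refine ContinuousLinearMap.opNorm_le_bound _ hK fun z => ?_
  have h1 := h (fun i => z i)
  rw [nsq_norm] at h1
  have h2 : nsq (M *ᵥ fun i => z i) = ‖LinearMap.toContinuousLinearMap (Matrix.toEuclideanLin M) z‖ ^ 2 :=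
    nsq_norm (LinearMap.toContinuousLinearMap (Matrix.toEuclideanLin M) z)
  rw [h2, ← mul_pow] at h1
  exact le_of_sq_le_sq h1 (by positivity)

theorem base_fam {n d : ℕ} (A : Fin n → Matrix (Fin d) (Fin d) ℝ) (hA : ∀ i, (A i).IsSymm) :
    Fam (fun _ : Fin n => 1) A (vX A ^ 2) (sigmaX A ^ 2) := by
  have hs : sigmaX A ^ 2 = opNorm (∑ i, A i * A i) := Real.sq_sqrt (opn_nonneg _)
  have hv : vX A ^ 2 = opNorm (covX A) := Real.sq_sqrt (opn_nonneg _)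
  have hc : ∀ x, ∑ j, (1:ℝ) * nsq ((A j) *ᵥ x) ≤ sigmaX A ^ 2 * nsq x := by
    intro x
    rw [hs]
    refine le_trans (le_of_eq ?_) (quad_le _ x)
    rw [Matrix.sum_mulVec, dotProduct_sum]
    refine Finset.sum_congr rfl fun i _ => ?_
    rw [one_mul, nsq_mulVec, hA i]
  refine ⟨fun _ => zero_le_one, sq_nonneg _, sq_nonneg _, fun M => ?_, fun x => ?_, hc⟩
  · rw [hv]
    have h1 := quad_le (covX A) (fun p => M p.1 p.2)
    have h2 : nsq (fun p : Fin d × Fin d => M p.1 p.2) = fsq M := by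
      simp only [nsq, fsq, Fintype.sum_prod_type]
    rw [h2] at h1
    refine le_trans (le_of_eq ?_) h1
    rw [covX, Matrix.sum_mulVec, dotProduct_sum]
    refine Finset.sum_congr rfl fun i _ => ?_
    have h3 : fip (A i) M = ∑ p : Fin d × Fin d, A i p.1 p.2 * M p.1 p.2 := by
      simp only [fip, Fintype.sum_prod_type]
    rw [h3, one_mul, sq, Finset.sum_mul_sum]
    simp only [dotProduct, mulVec, Matrix.of_apply, Finset.mul_sum]
    refine Finset.sum_congr rfl fun p _ => Finset.sum_congr rfl fun q _ => ?_
    ring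
  · simpa only [(hA _).eq] using hc x

theorem opn_trace {m : Type*} [Fintype m] [DecidableEq m] (Z : Matrix m m ℝ) (hZ : Z.IsSymm) (p : ℕ) (hp : 0 < p)
    (B : ℝ) (hB : 0 < B) : opNorm Z ≤ B + B * (trace (Z ^ (2*p)) / B ^ (2*p)) := by
  obtain ⟨U, l, h2, h1, h3⟩ := spec Z hZ
  have ht : trace (Z ^ (2*p)) = ∑ i, l i ^ (2*p) := by rw [h3, spec_trace h1 h2]
  have hli : ∀ i, l i ^ (2*p) ≤ trace (Z ^ (2*p)) := by
    intro i
    rw [ht]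
    exact Finset.single_le_sum (f := fun i => l i ^ (2*p)) (fun j _ => (even_two_mul p).pow_nonneg _) (Finset.mem_univ i)
  have ht0 : 0 ≤ trace (Z ^ (2*p)) := by
    rw [ht]; exact Finset.sum_nonneg fun j _ => (even_two_mul p).pow_nonneg _
  set K := B + B * (trace (Z ^ (2*p)) / B ^ (2*p)) with hK
  have hK0 : 0 ≤ K := by positivity
  have hl : ∀ i, |l i| ≤ K := by
    intro i
    rcases le_total (|l i|) B with h | h
    · have : 0 ≤ B * (trace (Z ^ (2*p)) / B ^ (2*p)) := by positivity
      linarith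
    · have h5 : 1 ≤ |l i| / B := (one_le_div hB).2 h
      have h6 : |l i| / B ≤ (|l i| / B) ^ (2*p) := le_self_pow₀ h5 (by omega)
      have h7 : (|l i| / B) ^ (2*p) ≤ trace (Z ^ (2*p)) / B ^ (2*p) := by
        rw [div_pow, (even_two_mul p).pow_abs]
        have := hli i
        gcongr
      have h8 := mul_le_mul_of_nonneg_left (h6.trans h7) hB.le
      rw [mul_div_cancel₀ _ hB.ne'] at h8
      linarith
  refine opn_le _ _ hK0 fun x => ?_
  have hU := contr_orth h1 h2
  have e : Z *ᵥ x = U *ᵥ (diagonal l *ᵥ (Uᵀ *ᵥ x)) := by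
    rw [mulVec_mulVec, mulVec_mulVec, h3, Matrix.mul_assoc]
  rw [e]
  refine (hU.1 _).trans ?_
  have h9 : nsq (diagonal l *ᵥ (Uᵀ *ᵥ x)) ≤ K ^ 2 * nsq (Uᵀ *ᵥ x) := by
    simp only [nsq, mulVec_diagonal, Finset.mul_sum]
    refine Finset.sum_le_sum fun i _ => ?_
    rw [mul_pow]
    refine mul_le_mul_of_nonneg_right ?_ (sq_nonneg _)
    rw [← sq_abs]
    have := hl i
    gcongr
  exact h9.trans (mul_le_mul_of_nonneg_left (hU.2 x) (sq_nonneg K))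

theorem exp_bound {n d : ℕ} (A : Fin n → Matrix (Fin d) (Fin d) ℝ) (hA : ∀ i, (A i).IsSymm) (q : ℕ)
    (hd : (d:ℝ) ≤ Real.exp (q+2)) (r : ℝ) (hr : 0 < r) (hrv : (q+2:ℝ)^3*(vX A^2*sigmaX A^2) ≤ r^2) :
    (∫ g, opNorm (∑ i, g i • A i) ∂(gaussianPi n)) ≤ 4 * Real.exp 9 * (2 * sigmaX A + Real.sqrt r) := by
  have hs : 0 ≤ sigmaX A := Real.sqrt_nonneg _
  have hF := base_fam A hA
  have hm := moment_bound hA hs hF q r hr hrv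
  set W := 2 * sigmaX A + Real.sqrt r with hW
  have hsr : 0 < Real.sqrt r := Real.sqrt_pos.2 hr
  have hW0 : 0 < W := by positivity
  set B := Real.exp 9 * W with hB
  have hB0 : 0 < B := by positivity
  have e1 : (2 * sigmaX A) ^ (2*(q+2)) ≤ W ^ (2*(q+2)) := by
    gcongr; linarith
  have e2 : r ^ (q+2) ≤ W ^ (2*(q+2)) := by
    have : r ^ (q+2) = (Real.sqrt r) ^ (2*(q+2)) := by rw [pow_mul, Real.sq_sqrt hr.le]
    rw [this]
    gcongr; linarith
  have e3 : gE (fun _ => 1) (trace (Zp A ^ (2*(q+2)))) ≤ 3 * B ^ (2*(q+2)) := by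
    refine hm.trans ?_
    rw [Fintype.card_fin]
    calc _ ≤ Real.exp (16*(q+2)) * (Real.exp (q+2) * (2 * W ^ (2*(q+2))) + W ^ (2*(q+2)) * Real.exp (q+2)) := by
          gcongr
      _ = 3 * (Real.exp (16*(q+2)) * Real.exp (q+2)) * W ^ (2*(q+2)) := by ring
      _ ≤ 3 * (Real.exp 9) ^ (2*(q+2)) * W ^ (2*(q+2)) := by
          rw [← Real.exp_add, ← Real.exp_nat_mul]
          gcongr
          push_cast
          have : (0:ℝ) ≤ q := by positivity
          linarith
      _ = _ := by rw [hB, mul_pow]; ring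
  have hev : ∀ g : Fin n → ℝ, eval (fun j => Real.sqrt ((fun _ => (1:ℝ)) j) * g j) (trace (Zp A ^ (2*(q+2)))) =
      trace ((∑ i, g i • A i) ^ (2*(q+2))) := by
    intro g
    simp only [Real.sqrt_one, one_mul]
    rw [ev_trace, map_pow, ev_Zp]; rfl
  have hInt := eval_integrable (fun _ : Fin n => (1:ℝ)) (trace (Zp A ^ (2*(q+2))))
  have hval := gE_eq_integral (fun _ : Fin n => (1:ℝ)) (fun _ => zero_le_one) (trace (Zp A ^ (2*(q+2))))
  simp only [hev] at hInt hval
  have hgp : gpi (Fin n) = gaussianPi n := rfl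
  rw [hgp] at hInt hval
  haveI : IsProbabilityMeasure (gaussianPi n) := by unfold gaussianPi; infer_instance
  have h1 : (∫ g, opNorm (∑ i, g i • A i) ∂(gaussianPi n)) ≤
      ∫ g, (B + B * (trace ((∑ i, g i • A i) ^ (2*(q+2))) / B ^ (2*(q+2)))) ∂(gaussianPi n) := by
    refine integral_mono_of_nonneg (Eventually.of_forall fun g => opn_nonneg _) ?_
      (Eventually.of_forall fun g => ?_)
    · exact (integrable_const B).add ((hInt.div_const _).const_mul B)
    · exact opn_trace _ (Zr_symm hA g) (q+2) (by omega) B hB0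
  refine h1.trans ?_
  rw [integral_add (integrable_const B) ((hInt.div_const _).const_mul B), integral_const, integral_const_mul, integral_div, ← hval]
  simp only [probReal_univ, one_smul]
  have h2 : gE (fun _ => 1) (trace (Zp A ^ (2*(q+2)))) / B ^ (2*(q+2)) ≤ 3 := by
    rw [div_le_iff₀ (by positivity)]; exact e3
  have h3 := mul_le_mul_of_nonneg_left h2 hB0.le
  calc _ ≤ B + B * 3 := by linarith
    _ = _ := by rw [hB]; ring

end Final

/-- **Theorem 2.1 (Bandeira–Boedihardjo–van Handel).** There is a universal constant
`C > 0` such that for all positive integers `n` and `d ≥ 2` and symmetric matrices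
`A 1, …, A n ∈ ℝ^{d×d}`, the Gaussian random matrix `X = ∑ g i • A i` (with `g`
i.i.d. standard Gaussian) satisfies
`𝔼[‖X‖_op] ≤ C (σ(X) + (log d)^{3/4} σ(X)^{1/2} v(X)^{1/2})`. -/
theorem bbvh_matrix_concentration :
    ∃ C : ℝ, 0 < C ∧ ∀ (n d : ℕ), 0 < n → 2 ≤ d →
      ∀ A : Fin n → Matrix (Fin d) (Fin d) ℝ, (∀ i, (A i).IsSymm) →
        (∫ g, opNorm (∑ i, g i • A i) ∂(gaussianPi n)) ≤
          C * (sigmaX A +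
            (Real.log d) ^ ((3 : ℝ) / 4) * Real.sqrt (sigmaX A) * Real.sqrt (vX A)) := by
  refine ⟨24 * Real.exp 9, by positivity, ?_⟩
  intro n d hn hd A hA
  set E := ∫ g, opNorm (∑ i, g i • A i) ∂(gaussianPi n) with hE
  have hs : 0 ≤ sigmaX A := Real.sqrt_nonneg _
  have hv : 0 ≤ vX A := Real.sqrt_nonneg _
  set ℓ := Real.log d with hl
  have hd' : (2:ℝ) ≤ d := by exact_mod_cast hd
  have hl2 : 0.69 ≤ ℓ := by
    have h1 := Real.log_le_log (by norm_num) hd'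
    have h2 := Real.log_two_gt_d9
    have h3 : (0.69:ℝ) ≤ 0.6931471803 := by norm_num
    linarith
  set q := ⌈ℓ⌉₊ with hq
  have hq1 : ℓ ≤ q := Nat.le_ceil _
  have hq2 : (q:ℝ) < ℓ + 1 := Nat.ceil_lt_add_one (by linarith)
  have hdq : (d:ℝ) ≤ Real.exp (q+2) := by
    rw [← Real.exp_log (show (0:ℝ) < d by linarith)]
    exact Real.exp_le_exp.2 (by linarith)
  set p : ℝ := q + 2 with hp
  have hp0 : 0 < p := by positivity
  have hp6 : p ≤ 6 * ℓ := by linarith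
  set ρ := Real.sqrt (p^3) * (vX A * sigmaX A) with hρ
  have hρ0 : 0 ≤ ρ := by positivity
  have key : ∀ ε : ℝ, 0 < ε → E ≤ 4 * Real.exp 9 * (2 * sigmaX A + Real.sqrt (ρ + ε)) := by
    intro ε hε
    refine exp_bound A hA q hdq (ρ + ε) (by positivity) ?_
    have h1 : ρ ^ 2 = p^3 * (vX A ^ 2 * sigmaX A ^ 2) := by
      rw [hρ, mul_pow, Real.sq_sqrt (by positivity)]; ring
    rw [← hp, ← h1]
    gcongr
    linarith
  have key0 : E ≤ 4 * Real.exp 9 * (2 * sigmaX A + Real.sqrt ρ) := by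
    have hcont : Continuous (fun ε : ℝ => 4 * Real.exp 9 * (2 * sigmaX A + Real.sqrt (ρ + ε))) := by fun_prop
    have ht := (hcont.tendsto 0).mono_left (nhdsWithin_le_nhds (s := Set.Ioi 0))
    have := ge_of_tendsto ht (Filter.eventually_of_mem self_mem_nhdsWithin key)
    simpa using this
  refine key0.trans ?_
  have hsq : Real.sqrt ρ ≤ 6 * (ℓ ^ ((3:ℝ)/4) * Real.sqrt (sigmaX A) * Real.sqrt (vX A)) := by
    have h1 : Real.sqrt (Real.sqrt (p^3)) = p ^ ((3:ℝ)/4) := by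
      rw [Real.sqrt_eq_rpow, Real.sqrt_eq_rpow, ← Real.rpow_natCast, ← Real.rpow_mul hp0.le, ← Real.rpow_mul hp0.le]
      norm_num
    have h2 : p ^ ((3:ℝ)/4) ≤ 6 * ℓ ^ ((3:ℝ)/4) := by
      have hl0 : 0 ≤ ℓ := by linarith
      calc p ^ ((3:ℝ)/4) ≤ (6 * ℓ) ^ ((3:ℝ)/4) := Real.rpow_le_rpow hp0.le hp6 (by norm_num)
        _ = 6 ^ ((3:ℝ)/4) * ℓ ^ ((3:ℝ)/4) := Real.mul_rpow (by norm_num) hl0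
        _ ≤ 6 ^ (1:ℝ) * ℓ ^ ((3:ℝ)/4) := by
            gcongr
            · norm_num
            · norm_num
        _ = _ := by rw [Real.rpow_one]
    rw [hρ, Real.sqrt_mul (by positivity), Real.sqrt_mul hv, h1]
    calc _ ≤ 6 * ℓ ^ ((3:ℝ)/4) * (Real.sqrt (vX A) * Real.sqrt (sigmaX A)) := by gcongr
      _ = _ := by ring
  have he := Real.exp_pos 9
  have h1 : 2 * sigmaX A + Real.sqrt ρ ≤
      6 * (sigmaX A + ℓ ^ ((3:ℝ)/4) * Real.sqrt (sigmaX A) * Real.sqrt (vX A)) := by linarith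
  calc _ ≤ 4 * Real.exp 9 * (6 * (sigmaX A + ℓ ^ ((3:ℝ)/4) * Real.sqrt (sigmaX A) * Real.sqrt (vX A))) := by gcongr
    _ = _ := by ring
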